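/- arXiv:1403.4555 — 5 statements merged into one kernel-verified Lean document; each statement's English description precedes it below -/
import Mathlib

section
/- There exists a bounded linear operator T on the Banach space c₀(ℤ) (the space of two-sided sequences vanishing at infinity, with the sup norm) which is frequently hypercyclic but does not admit any ergodic T-invariant Borel probability measure with full support. -/
open MeasureTheory Filter Topology Set ZeroAtInfty

/-- The lower density of a set of natural numbers:
`liminf_{N→∞} #(A ∩ [1,N]) / N`. -/
noncomputable def lowerDensity (A : Set ℕ) : ℝ :=
  Filter.liminf (fun N : ℕ => (Nat.card ↥(A ∩ Set.Icc 1 N) : ℝ) / N) Filter.atTop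

/-- `x` is a frequently hypercyclic point for `T`. -/
def FreqHypPt {X : Type*} [TopologicalSpace X] (T : X → X) (x : X) : Prop :=
  ∀ V : Set X, IsOpen V → V.Nonempty → 0 < lowerDensity {n : ℕ | T^[n] x ∈ V}

/-!
Let `A ∋ 0` be a set of natural numbers of positive upper density, let `d k` be the distance from
`-k` to the next element of `A`, and let `T` be the weighted shift
`(T u) k = w (k + 1) / w k * u (k + 1)` with `w = 2 ^ d`. At a time `a ∈ A` the weight satisfies
`w (-a) = w 0 = 1`, so `|u 0| ≤ ‖T ^ a u‖` for every `u`. If an ergodic measure `μ` gives positive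
mass to `{u | R < |u 0|}`, the orbits starting there visit `{u | R < ‖u‖}` at all times in `A`, so
that `μ {u | R < ‖u‖}` is at least the upper density of `A`. This cannot hold for all `R`.

A frequently hypercyclic vector is obtained by superposing finite patterns around the times of a
set `S`. At time `m ∈ S` the pattern belonging to another `n ∈ S` appears around the coordinate
`n - m`, divided by `w` there, and this is negligible as soon as `m - n` is far from `A`. It remains
to find `A` avoiding the differences of `S`. Patterns of radius `p` are scheduled at multiples of
`16 ^ (p + 1)`, and only in blocks `[16 ^ k, 2 * 16 ^ k)` whose exponent `k` has `2`-adic valuation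
`p`. Differences between two such blocks miss all the blocks `[3 * 16 ^ t, 4 * 16 ^ t)`, while
differences inside a block are so sparse that removing a neighbourhood of size proportional to `p`
of each of them, for all `p`, leaves at least half of `[3 * 16 ^ t, 4 * 16 ^ t)`.
-/

open scoped ENNReal

lemma liminf_birkhoffSum_div_le_apply {X : Type*} {T : X → X} {f : X → ℝ≥0∞}
    (hf_top : ∀ x, f x ≠ ∞) {l : Filter ℕ} (hl : l ≤ atTop) (x : X) :
    liminf (fun N : ℕ => birkhoffSum T f N x / N) l ≤
      liminf (fun N : ℕ => birkhoffSum T f N (T x) / N) l := by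
  have h_zero : Tendsto (fun N : ℕ => f x / N) l (𝓝 0) := by
    simpa only [div_eq_mul_inv, mul_zero] using
      (ENNReal.Tendsto.const_mul ENNReal.tendsto_inv_nat_nhds_zero (Or.inr (hf_top x))).mono_left hl
  refine (liminf_le_liminf (Eventually.of_forall fun N => ?_)).trans_eq
    (ENNReal.liminf_add_of_right_tendsto_zero h_zero _)
  have h_le : birkhoffSum T f N x ≤ birkhoffSum T f N (T x) + f x := by
    rw [add_comm, ← birkhoffSum_succ', birkhoffSum_succ]
    exact le_self_add
  exact (ENNReal.div_le_div_right h_le _).trans_eq ENNReal.add_div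

section Ergodic

variable {X : Type*} [MeasurableSpace X] {μ : Measure X} {T : X → X}

lemma measurable_birkhoffSum {f : X → ℝ≥0∞} (hT : Measurable T) (hf : Measurable f) (n : ℕ) :
    Measurable (birkhoffSum T f n) := by
  unfold birkhoffSum
  exact Finset.measurable_sum _ fun k _ => hf.comp (hT.iterate k)

lemma lintegral_birkhoffSum {f : X → ℝ≥0∞} (hT : MeasurePreserving T μ μ) (hf : Measurable f)
    (n : ℕ) : ∫⁻ x, birkhoffSum T f n x ∂μ = n * ∫⁻ x, f x ∂μ := by
  have h_meas (k : ℕ) : Measurable fun x => f (T^[k] x) := hf.comp (hT.measurable.iterate k)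
  simp_rw [birkhoffSum]
  rw [lintegral_finsetSum _ fun k _ => h_meas k]
  simp_rw [(hT.iterate _).lintegral_comp hf]
  rw [Finset.sum_const, Finset.card_range, nsmul_eq_mul]

-- Fatou's lemma takes the place of Birkhoff's theorem.
theorem le_lintegral_of_le_liminf_birkhoffSum [IsProbabilityMeasure μ] (hT : Ergodic T μ)
    {f : X → ℝ≥0∞} (hf : Measurable f) (hf_top : ∀ x, f x ≠ ∞)
    {l : Filter ℕ} [l.NeBot] [l.IsCountablyGenerated] (hl : l ≤ atTop)
    {c : ℝ≥0∞} {s : Set X} (hs : μ s ≠ 0)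
    (hc : ∀ x ∈ s, c ≤ liminf (fun N : ℕ => birkhoffSum T f N x / N) l) :
    c ≤ ∫⁻ x, f x ∂μ := by
  set g : X → ℝ≥0∞ := fun x => liminf (fun N : ℕ => birkhoffSum T f N x / N) l
  have h_meas (N : ℕ) : Measurable fun x => birkhoffSum T f N x / N :=
    (measurable_birkhoffSum hT.measurable hf N).div_const _
  obtain ⟨B, hB⟩ := l.exists_antitone_basis
  have hg_meas : MeasurableSet {x | c ≤ g x} :=
    measurableSet_le measurable_const
      (.liminf' h_meas ⟨hB.toHasBasis, to_countable _⟩ fun _ => to_countable _)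
  have hg_ae : ∀ᵐ x ∂μ, c ≤ g x := by
    have h_subset : {x | c ≤ g x} ⊆ T ⁻¹' {x | c ≤ g x} := fun x (hx : c ≤ g x) =>
      hx.trans (liminf_birkhoffSum_div_le_apply hf_top hl x)
    rcases hT.ae_empty_or_univ_of_ae_le_preimage hg_meas.nullMeasurableSet
      h_subset.eventuallyLE with h | h
    · exact absurd (measure_mono_null hc (ae_eq_empty.1 h)) hs
    · exact eventuallyEq_univ.1 h
  calc c = ∫⁻ _, c ∂μ := by simp
    _ ≤ ∫⁻ x, g x ∂μ := lintegral_mono_ae hg_ae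
    _ ≤ liminf (fun N : ℕ => ∫⁻ x, birkhoffSum T f N x / N ∂μ) l := lintegral_liminf_le h_meas
    _ = liminf (fun _ : ℕ => ∫⁻ x, f x ∂μ) l := by
      refine liminf_congr ?_
      filter_upwards [hl (eventually_ne_atTop 0)] with N hN
      simp_rw [div_eq_mul_inv]
      rw [lintegral_mul_const _ (measurable_birkhoffSum hT.measurable hf N),
        lintegral_birkhoffSum hT.toMeasurePreserving hf, mul_right_comm,
        ENNReal.mul_inv_cancel (by exact_mod_cast hN) (ENNReal.natCast_ne_top N), one_mul]
    _ = ∫⁻ x, f x ∂μ := liminf_const _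

theorem le_measure_of_frequently_visits [IsProbabilityMeasure μ] (hT : Ergodic T μ)
    {A s : Set X} (hA : MeasurableSet A) (hs : μ s ≠ 0)
    {G : Set ℕ} [DecidablePred (· ∈ G)] {c : ℝ≥0∞}
    (hG : ∃ᶠ N : ℕ in atTop, c * N ≤ {n ∈ Finset.range N | n ∈ G}.card)
    (hA_visit : ∀ x ∈ s, ∀ n ∈ G, T^[n] x ∈ A) : c ≤ μ A := by
  set good : Set ℕ := {N | c * N ≤ {n ∈ Finset.range N | n ∈ G}.card}
  have : (atTop ⊓ 𝓟 good).NeBot := frequently_mem_iff_neBot.1 hG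
  rw [← lintegral_indicator_one hA]
  refine le_lintegral_of_le_liminf_birkhoffSum hT (measurable_one.indicator hA)
    (fun x => by by_cases hx : x ∈ A <;> simp [hx]) (inf_le_left : atTop ⊓ 𝓟 good ≤ atTop) hs
    fun x hx => le_liminf_of_le (by isBoundedDefault) ?_
  filter_upwards [inf_le_right (a := atTop) (mem_principal_self good),
    inf_le_left (b := 𝓟 good) (eventually_ne_atTop 0)] with N (hN : c * N ≤ _) hN₀
  rw [ENNReal.le_div_iff_mul_le (by simp [hN₀]) (by simp)]
  refine hN.trans ?_
  rw [Finset.card_filter, Nat.cast_sum, birkhoffSum]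
  refine Finset.sum_le_sum fun n _ => ?_
  split_ifs with hn
  · simp [hA_visit x hx n hn]
  · simp

lemma tendsto_measure_natCast_lt [IsFiniteMeasure μ] {ψ : X → ℝ} (hψ : Measurable ψ) :
    Tendsto (fun n : ℕ => μ {x | (n : ℝ) < ψ x}) atTop (𝓝 0) := by
  have h_anti : Antitone fun n : ℕ => {x | (n : ℝ) < ψ x} :=
    fun m n hmn x (hx : (n : ℝ) < ψ x) => (Nat.cast_le.2 hmn).trans_lt hx
  have h_inter : ⋂ n : ℕ, {x | (n : ℝ) < ψ x} = ∅ :=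
    eq_empty_of_forall_notMem fun x hx =>
      let ⟨n, hn⟩ := exists_nat_gt (ψ x)
      hn.not_gt (mem_iInter.1 hx n)
  simpa only [h_inter, measure_empty, Function.comp_def] using tendsto_measure_iInter_atTop
    (fun _ => (measurableSet_lt measurable_const hψ).nullMeasurableSet) h_anti
    ⟨0, measure_ne_top μ _⟩

theorem not_ergodic_of_le_comp_iterate [TopologicalSpace X] [IsProbabilityMeasure μ]
    [μ.IsOpenPosMeasure] {φ ψ : X → ℝ} (hφ : LowerSemicontinuous φ) (hφ_unbdd : ∀ R, ∃ x, R < φ x)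
    (hψ : Measurable ψ) {G : Set ℕ} [DecidablePred (· ∈ G)] {c : ℝ≥0∞} (hc : c ≠ 0)
    (hG : ∃ᶠ N : ℕ in atTop, c * N ≤ {n ∈ Finset.range N | n ∈ G}.card)
    (hφψ : ∀ n ∈ G, ∀ x, φ x ≤ ψ (T^[n] x)) : ¬ Ergodic T μ := by
  intro hT
  have h_tail (n : ℕ) : c ≤ μ {x | (n : ℝ) < ψ x} :=
    le_measure_of_frequently_visits hT (measurableSet_lt measurable_const hψ)
      ((hφ.isOpen_preimage n).measure_pos μ (hφ_unbdd n)).ne' hG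
      fun x (hx : n < φ x) g hg => hx.trans_le (hφψ g hg x)
  exact hc (le_zero_iff.1 (ge_of_tendsto' (tendsto_measure_natCast_lt hψ) h_tail))

end Ergodic

section LowerDensity

variable {A B : Set ℕ}

lemma card_inter_Icc_div_le_one (A : Set ℕ) (N : ℕ) :
    (Nat.card ↥(A ∩ Icc 1 N) : ℝ) / N ≤ 1 := by
  have h_le : Nat.card ↥(A ∩ Icc 1 N) ≤ Nat.card ↥(Icc 1 N) :=
    Nat.card_mono (finite_Icc 1 N) inter_subset_right
  refine div_le_one_of_le₀ ?_ N.cast_nonneg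
  exact_mod_cast h_le.trans_eq (by simp)

lemma isBoundedUnder_card_inter_Icc_div (A : Set ℕ) :
    IsBoundedUnder (· ≤ ·) atTop fun N : ℕ => (Nat.card ↥(A ∩ Icc 1 N) : ℝ) / N :=
  isBoundedUnder_of ⟨1, card_inter_Icc_div_le_one A⟩

lemma lowerDensity_mono (hAB : A ⊆ B) : lowerDensity A ≤ lowerDensity B := by
  refine liminf_le_liminf (Eventually.of_forall fun N => ?_)
    (isBoundedUnder_of ⟨0, fun N => by positivity⟩)
    (isBoundedUnder_card_inter_Icc_div B).isCoboundedUnder_ge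
  have : Nat.card ↥(A ∩ Icc 1 N) ≤ Nat.card ↥(B ∩ Icc 1 N) :=
    Nat.card_mono ((finite_Icc 1 N).inter_of_right B) (inter_subset_inter_left _ hAB)
  gcongr

lemma le_lowerDensity_of_eventually_le {c : ℝ}
    (h : ∀ᶠ N : ℕ in atTop, c * N ≤ Nat.card ↥(A ∩ Icc 1 N)) : c ≤ lowerDensity A := by
  refine le_liminf_of_le (isBoundedUnder_card_inter_Icc_div A).isCoboundedUnder_ge ?_
  filter_upwards [h, eventually_gt_atTop 0] with N hN hN_pos
  rwa [le_div_iff₀ (by exact_mod_cast hN_pos)]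

end LowerDensity

namespace C0Int

/-- The element of `c₀(ℤ)` with prescribed coordinates. On the discrete space `ℤ`, vanishing at
infinity is convergence to `0` along `cofinite`. -/
def ofTendsto (f : ℤ → ℝ) (hf : Tendsto f cofinite (𝓝 0)) : C₀(ℤ, ℝ) where
  toFun := f
  zero_at_infty' := by rwa [cocompact_eq_cofinite]

@[simp]
lemma ofTendsto_apply (f : ℤ → ℝ) (hf : Tendsto f cofinite (𝓝 0)) (k : ℤ) :
    ofTendsto f hf k = f k :=
  rfl

lemma tendsto_cofinite (u : C₀(ℤ, ℝ)) : Tendsto u cofinite (𝓝 0) :=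
  cocompact_eq_cofinite ℤ ▸ u.zero_at_infty'

lemma abs_apply_le_norm (u : C₀(ℤ, ℝ)) (k : ℤ) : |u k| ≤ ‖u‖ :=
  u.toBCF.norm_coe_le_norm k

lemma norm_le {u : C₀(ℤ, ℝ)} {c : ℝ} (hc : 0 ≤ c) : ‖u‖ ≤ c ↔ ∀ k, |u k| ≤ c :=
  BoundedContinuousFunction.norm_le (f := u.toBCF) hc

lemma continuous_apply (k : ℤ) : Continuous fun u : C₀(ℤ, ℝ) => u k :=
  (continuous_eval_const (F := BoundedContinuousFunction ℤ ℝ) k).comp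
    (ZeroAtInftyContinuousMap.isometry_toBCF (α := ℤ) (β := ℝ)).continuous

lemma exists_lt_abs_apply (k : ℤ) (R : ℝ) : ∃ u : C₀(ℤ, ℝ), R < |u k| := by
  let f : ℤ → ℝ := Pi.single k (|R| + 1)
  have hf : Tendsto f cofinite (𝓝 0) := by
    refine tendsto_const_nhds.congr' ?_
    filter_upwards [(finite_singleton k).compl_mem_cofinite] with i hi
    exact (Pi.single_eq_of_ne (M := fun _ => ℝ) hi _).symm
  refine ⟨ofTendsto f hf, ?_⟩
  rw [ofTendsto_apply, show f k = |R| + 1 from Pi.single_eq_same k _]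
  exact (le_abs_self R).trans_lt ((lt_add_one _).trans_le (le_abs_self _))

end C0Int

section WeightedShift

variable {w : ℤ → ℝ} {C : ℝ}

/-- The operator on `c₀(ℤ)` which the rescaling `u ↦ w • u` conjugates to the backward shift, that
is, the backward weighted shift whose weights are the quotients `w (k + 1) / w k`. -/
noncomputable def quotientShift (w : ℤ → ℝ) (hw : ∀ k, |w (k + 1) / w k| ≤ C) :
    C₀(ℤ, ℝ) →L[ℝ] C₀(ℤ, ℝ) :=
  LinearMap.mkContinuous
    { toFun u := C0Int.ofTendsto (fun k => w (k + 1) / w k * u (k + 1)) <|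
        bdd_le_mul_tendsto_zero' C (Eventually.of_forall hw) <|
          (C0Int.tendsto_cofinite u).comp (add_left_injective (1 : ℤ)).tendsto_cofinite
      map_add' u v := by ext k; simp [mul_add]
      map_smul' a u := by ext k; simp [mul_left_comm] } C fun u => by
    have hC : 0 ≤ C := (abs_nonneg _).trans (hw 0)
    refine (C0Int.norm_le (by positivity)).2 fun k => (abs_mul _ _).trans_le ?_
    exact mul_le_mul (hw k) (C0Int.abs_apply_le_norm u _) (abs_nonneg _) hC

lemma quotientShift_apply (hw : ∀ k, |w (k + 1) / w k| ≤ C) (u : C₀(ℤ, ℝ)) (k : ℤ) :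
    quotientShift w hw u k = w (k + 1) / w k * u (k + 1) :=
  rfl

lemma quotientShift_iterate_apply (hw : ∀ k, |w (k + 1) / w k| ≤ C) (hw_ne : ∀ k, w k ≠ 0)
    (n : ℕ) (u : C₀(ℤ, ℝ)) (k : ℤ) :
    (quotientShift w hw)^[n] u k = w (k + n) / w k * u (k + n) := by
  induction n generalizing k with
  | zero => simp [hw_ne k]
  | succ n ih =>
    rw [Function.iterate_succ_apply', quotientShift_apply, ih, add_assoc, ← Nat.cast_one (R := ℤ),
      ← Nat.cast_add, add_comm 1 n, ← mul_assoc, mul_comm (_ / w k), Nat.cast_one,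
      div_mul_div_cancel₀ (hw_ne _)]

end WeightedShift

section Patterns

lemma exists_forall_frequently_eq (α : Type*) [Countable α] [Nonempty α] :
    ∃ a : ℕ → α, ∀ z, ∃ᶠ p in atTop, a p = z := by
  obtain ⟨e, he⟩ := exists_surjective_nat α
  refine ⟨fun p => e p.unpair.1, fun z => frequently_atTop.2 fun P => ?_⟩
  obtain ⟨j, rfl⟩ := he z
  exact ⟨Nat.pair j P, Nat.right_le_pair j P, by simp⟩

/-- The restriction of `z` to the window `[-p, p]`, with the entries exceeding `2 ^ p` erased: a
pattern of radius `p` and height at most `2 ^ p` that is equal to `z` for large `p`. -/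
noncomputable def truncation (z : ℤ →₀ ℚ) (p : ℕ) (i : ℤ) : ℝ :=
  if |i| ≤ p ∧ |(z i : ℝ)| ≤ 2 ^ p then z i else 0

lemma truncation_of_lt_abs (z : ℤ →₀ ℚ) {p : ℕ} {i : ℤ} (hi : p < |i|) : truncation z p i = 0 :=
  if_neg fun h => hi.not_ge h.1

lemma abs_truncation_le (z : ℤ →₀ ℚ) (p : ℕ) (i : ℤ) : |truncation z p i| ≤ 2 ^ p := by
  unfold truncation
  split_ifs with h
  · exact h.2
  · simp

lemma eventually_truncation_eq (z : ℤ →₀ ℚ) : ∀ᶠ p in atTop, ∀ i, truncation z p i = z i := by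
  have h_support : ∀ᶠ p : ℕ in atTop, ∀ i ∈ z.support, |i| ≤ p ∧ |(z i : ℝ)| ≤ 2 ^ p := by
    refine (Finset.eventually_all _).2 fun i _ => ?_
    exact (tendsto_natCast_atTop_atTop.eventually_ge_atTop _).and
      ((tendsto_pow_atTop_atTop_of_one_lt one_lt_two).eventually_ge_atTop _)
  filter_upwards [h_support] with p hp i
  by_cases hi : i ∈ z.support
  · exact if_pos (hp i hi)
  · simp [truncation, Finsupp.notMem_support_iff.1 hi]

lemma exists_finsupp_abs_div_sub_le {w : ℤ → ℝ} (hw : ∀ k, 0 < w k) (v : C₀(ℤ, ℝ)) {ε : ℝ}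
    (hε : 0 < ε) : ∃ z : ℤ →₀ ℚ, ∀ i, |z i / w i - v i| ≤ ε := by
  have h_small : ∀ᶠ i in cofinite, |v i| < ε := by
    simpa using (C0Int.tendsto_cofinite v).eventually (Metric.ball_mem_nhds 0 hε)
  have hq (i : ℤ) : ∃ q : ℚ, |w i * v i - q| < ε * w i := exists_rat_near _ (mul_pos hε (hw i))
  choose q hq using hq
  refine ⟨Finsupp.indicator (eventually_cofinite.1 h_small).toFinset fun i _ => q i, fun i => ?_⟩
  rw [Finsupp.indicator_apply]
  split_ifs with hi
  · rw [div_sub' (hw i).ne', abs_div, abs_of_pos (hw i), div_le_iff₀ (hw i), abs_sub_comm]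
    exact (hq i).le
  · have : |v i| < ε := by simpa using hi
    simpa using this.le

end Patterns

section Superposition

/-- A schedule for building a frequently hypercyclic vector of `quotientShift w`: at each time
`n ∈ S` the orbit is to display a pattern of radius `ρ n` and height at most `2 ^ ρ n`. The fields
say that the windows of distinct visits are disjoint, that the superposition of all patterns,
divided by `w`, vanishes at infinity and, at a visit `m ∈ S`, is small outside the window of `m`,
and that each radius is used with positive lower density. -/
structure IsVisitSchedule (w : ℤ → ℝ) (S : Set ℕ) (ρ : ℕ → ℕ) : Prop where
  add_add_lt : ∀ m ∈ S, ∀ n ∈ S, m < n → m + ρ m + ρ n < n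
  eventually_pow_le : ∀ M : ℕ, ∀ᶠ l : ℤ in cofinite, ∀ n ∈ S, |l - n| ≤ ρ n → 2 ^ (ρ n + M) ≤ w l
  pow_le : ∀ m ∈ S, ∀ n ∈ S, m ≠ n → ∀ k : ℤ, |k + m - n| ≤ ρ n → 2 ^ (ρ m + ρ n) ≤ w k
  lowerDensity_pos : ∀ p, 0 < lowerDensity {n ∈ S | ρ n = p}

/-- The sum of the patterns `y (ρ n)` centred at the times `n ∈ S`; divided by `w` it becomes the
frequently hypercyclic vector. -/
noncomputable def superposition (S : Set ℕ) (ρ : ℕ → ℕ) (y : ℕ → ℤ → ℝ) (l : ℤ) : ℝ :=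
  ∑ᶠ n ∈ S, y (ρ n) (l - n)

namespace IsVisitSchedule

variable {w : ℤ → ℝ} {S : Set ℕ} {ρ : ℕ → ℕ} {y : ℕ → ℤ → ℝ}

lemma eq_of_abs_sub_le (h : IsVisitSchedule w S ρ) {m n : ℕ} (hm : m ∈ S) (hn : n ∈ S) {l : ℤ}
    (hlm : |l - m| ≤ ρ m) (hln : |l - n| ≤ ρ n) : m = n := by
  rw [abs_le] at hlm hln
  rcases lt_trichotomy m n with hmn | hmn | hmn
  · have := h.add_add_lt m hm n hn hmn
    omega
  · exact hmn
  · have := h.add_add_lt n hn m hm hmn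
    omega

lemma superposition_eq (h : IsVisitSchedule w S ρ) (hy : ∀ (p : ℕ) (i : ℤ), p < |i| → y p i = 0)
    {n : ℕ} (hn : n ∈ S) {l : ℤ} (hl : |l - n| ≤ ρ n) :
    superposition S ρ y l = y (ρ n) (l - n) := by
  classical
  have h_unique (m : ℕ) (hmn : m ≠ n) : ∑ᶠ _ : m ∈ S, y (ρ m) (l - m) = 0 := by
    rw [finsum_eq_if, ite_eq_right_iff]
    exact fun hm => hy _ _ <| lt_of_not_ge fun hlm => hmn (h.eq_of_abs_sub_le hm hn hlm hl)
  rw [superposition, finsum_eq_single _ n h_unique, finsum_eq_if, if_pos hn]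

lemma superposition_eq_zero_or (h : IsVisitSchedule w S ρ)
    (hy : ∀ (p : ℕ) (i : ℤ), p < |i| → y p i = 0) (hy_le : ∀ p i, |y p i| ≤ 2 ^ p) (l : ℤ) :
    superposition S ρ y l = 0 ∨
      ∃ n ∈ S, |l - n| ≤ ρ n ∧ |superposition S ρ y l| ≤ 2 ^ ρ n := by
  refine or_iff_not_imp_left.2 fun h_ne => ?_
  obtain ⟨n, hn, hyn⟩ := exists_ne_zero_of_finsum_mem_ne_zero h_ne
  have hl : |l - n| ≤ ρ n := not_lt.1 (mt (hy _ _) hyn)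
  exact ⟨n, hn, hl, h.superposition_eq hy hn hl ▸ hy_le _ _⟩

lemma tendsto_superposition_div (h : IsVisitSchedule w S ρ) (hw : ∀ k, 0 < w k)
    (hy : ∀ (p : ℕ) (i : ℤ), p < |i| → y p i = 0) (hy_le : ∀ p i, |y p i| ≤ 2 ^ p) :
    Tendsto (fun l => superposition S ρ y l / w l) cofinite (𝓝 0) := by
  refine Metric.nhds_basis_closedBall.tendsto_right_iff.2 fun ε hε => ?_
  obtain ⟨M, hM⟩ := exists_pow_lt_of_lt_one hε (one_half_lt_one (α := ℝ))
  filter_upwards [h.eventually_pow_le M] with l hl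
  rw [mem_closedBall_zero_iff, Real.norm_eq_abs]
  refine le_trans ?_ hM.le
  rcases h.superposition_eq_zero_or hy hy_le l with h₀ | ⟨n, hn, hln, h_le⟩
  · simp [h₀]
  rw [abs_div, abs_of_pos (hw l), div_le_iff₀ (hw l)]
  calc |superposition S ρ y l| ≤ 2 ^ ρ n := h_le
    _ = (1 / 2) ^ M * 2 ^ (ρ n + M) := by rw [pow_add, one_div, inv_pow]; field_simp
    _ ≤ (1 / 2) ^ M * w l := by gcongr; exact hl n hn hln

lemma abs_superposition_sub_le (h : IsVisitSchedule w S ρ) (hw : ∀ k, 0 < w k)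
    (hy : ∀ (p : ℕ) (i : ℤ), p < |i| → y p i = 0) (hy_le : ∀ p i, |y p i| ≤ 2 ^ p)
    {m : ℕ} (hm : m ∈ S) (i : ℤ) :
    |superposition S ρ y (i + m) - y (ρ m) i| ≤ (1 / 2) ^ ρ m * w i := by
  have h_nonneg : 0 ≤ (1 / 2) ^ ρ m * w i := by have := hw i; positivity
  by_cases hi : |i| ≤ ρ m
  · rw [h.superposition_eq hy hm (by rwa [add_sub_cancel_right]), add_sub_cancel_right, sub_self,
      abs_zero]
    exact h_nonneg
  rw [hy _ _ (not_le.1 hi), sub_zero]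
  rcases h.superposition_eq_zero_or hy hy_le (i + m) with h₀ | ⟨n, hn, hin, h_le⟩
  · rwa [h₀, abs_zero]
  have hmn : m ≠ n := by
    rintro rfl
    exact hi (by rwa [add_sub_cancel_right] at hin)
  calc |superposition S ρ y (i + m)| ≤ 2 ^ ρ n := h_le
    _ = (1 / 2) ^ ρ m * 2 ^ (ρ m + ρ n) := by rw [pow_add, one_div, inv_pow]; field_simp
    _ ≤ (1 / 2) ^ ρ m * w i := by gcongr; exact h.pow_le m hm n hn hmn i hin

lemma dist_iterate_quotientShift_le (h : IsVisitSchedule w S ρ) (hw_pos : ∀ k, 0 < w k) {C : ℝ}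
    (hw : ∀ k, |w (k + 1) / w k| ≤ C) (hy : ∀ (p : ℕ) (i : ℤ), p < |i| → y p i = 0)
    (hy_le : ∀ p i, |y p i| ≤ 2 ^ p) {m : ℕ} (hm : m ∈ S) {v : C₀(ℤ, ℝ)} {δ : ℝ}
    (hv : ∀ i, |y (ρ m) i / w i - v i| ≤ δ) :
    dist ((quotientShift w hw)^[m]
      (C0Int.ofTendsto _ (h.tendsto_superposition_div hw_pos hy hy_le))) v ≤ (1 / 2) ^ ρ m + δ := by
  have hδ : 0 ≤ δ := (abs_nonneg _).trans (hv 0)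
  rw [dist_eq_norm, C0Int.norm_le (by positivity)]
  intro i
  have hwi := hw_pos i
  have h_split : (quotientShift w hw)^[m]
      (C0Int.ofTendsto _ (h.tendsto_superposition_div hw_pos hy hy_le)) i - v i =
      (superposition S ρ y (i + m) - y (ρ m) i) / w i + (y (ρ m) i / w i - v i) := by
    rw [quotientShift_iterate_apply hw fun k => (hw_pos k).ne', C0Int.ofTendsto_apply]
    have := (hw_pos (i + m)).ne'
    field_simp
    ring
  rw [ZeroAtInftyContinuousMap.sub_apply, h_split]
  refine (abs_add_le _ _).trans (add_le_add ?_ (hv i))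
  rw [abs_div, abs_of_pos hwi, div_le_iff₀ hwi]
  exact h.abs_superposition_sub_le hw_pos hy hy_le hm i

theorem exists_freqHypPt (h : IsVisitSchedule w S ρ) (hw_pos : ∀ k, 0 < w k) {C : ℝ}
    (hw : ∀ k, |w (k + 1) / w k| ≤ C) : ∃ x, FreqHypPt (quotientShift w hw) x := by
  obtain ⟨a, ha⟩ := exists_forall_frequently_eq (ℤ →₀ ℚ)
  have hy (p : ℕ) (i : ℤ) : (p : ℤ) < |i| → truncation (a p) p i = 0 := truncation_of_lt_abs _
  have hy_le (p : ℕ) (i : ℤ) : |truncation (a p) p i| ≤ 2 ^ p := abs_truncation_le _ _ _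
  refine ⟨C0Int.ofTendsto _ (h.tendsto_superposition_div hw_pos hy hy_le), fun V hV hV_ne => ?_⟩
  obtain ⟨v, hv⟩ := hV_ne
  obtain ⟨ε, hε, h_ball⟩ := Metric.nhds_basis_closedBall.mem_iff.1 (hV.mem_nhds hv)
  obtain ⟨z, hz⟩ := exists_finsupp_abs_div_sub_le hw_pos v (half_pos hε)
  have h_half : ∀ᶠ p : ℕ in atTop, (1 / 2 : ℝ) ^ p ≤ ε / 2 :=
    (tendsto_pow_atTop_nhds_zero_of_lt_one (by norm_num) one_half_lt_one).eventually_le_const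
      (half_pos hε)
  obtain ⟨p, hap, hpz, hp⟩ :=
    ((ha z).and_eventually ((eventually_truncation_eq z).and h_half)).exists
  refine (h.lowerDensity_pos p).trans_le (lowerDensity_mono ?_)
  rintro m ⟨hm, rfl⟩
  refine h_ball (Metric.mem_closedBall.2 ?_)
  refine (h.dist_iterate_quotientShift_le hw_pos hw hy hy_le hm (δ := ε / 2) fun i => ?_).trans
    (by linarith)
  rw [hap, hpz]
  exact hz i

end IsVisitSchedule

end Superposition

section NextGap

variable {A : Set ℕ}

/-- The distance from `-k` to the next element of `A`, used as the exponent of the weight at `k`;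
the junk value `sInf ∅ = 0` appears where there is none. -/
noncomputable def nextGap (A : Set ℕ) (k : ℤ) : ℕ :=
  sInf {e : ℕ | ∃ a ∈ A, (e : ℤ) = k + a}

lemma exists_nextGap_eq_add (hA : A.Infinite) (k : ℤ) : ∃ a ∈ A, (nextGap A k : ℤ) = k + a := by
  obtain ⟨a, ha, hka⟩ := hA.exists_gt (-k).toNat
  exact Nat.sInf_mem (s := {e : ℕ | ∃ a ∈ A, (e : ℤ) = k + a}) ⟨(k + a).toNat, a, ha, by omega⟩

lemma nextGap_add_one_le (hA : A.Infinite) (k : ℤ) : nextGap A (k + 1) ≤ nextGap A k + 1 := by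
  obtain ⟨a, ha, hka⟩ := exists_nextGap_eq_add hA k
  exact Nat.sInf_le ⟨a, ha, by omega⟩

lemma le_nextGap (hA : A.Infinite) {k : ℤ} {r : ℕ} (hr : ∀ a ∈ A, 0 ≤ k + a → r ≤ k + a) :
    r ≤ nextGap A k := by
  obtain ⟨a, ha, hka⟩ := exists_nextGap_eq_add hA k
  have := hr a ha (by omega)
  omega

lemma nextGap_neg_natCast {a : ℕ} (ha : a ∈ A) : nextGap A (-a) = 0 :=
  Nat.le_zero.1 (Nat.sInf_le ⟨a, ha, by simp⟩)

lemma abs_two_pow_nextGap_div_le (hA : A.Infinite) (k : ℤ) :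
    |(2 : ℝ) ^ nextGap A (k + 1) / 2 ^ nextGap A k| ≤ 2 := by
  rw [abs_of_pos (by positivity), div_le_iff₀ (by positivity), ← pow_succ']
  exact pow_le_pow_right₀ one_le_two (nextGap_add_one_le hA k)

lemma abs_apply_zero_le_norm_iterate (hA₀ : 0 ∈ A) {C : ℝ}
    (hw : ∀ k, |(2 : ℝ) ^ nextGap A (k + 1) / 2 ^ nextGap A k| ≤ C) {a : ℕ} (ha : a ∈ A)
    (u : C₀(ℤ, ℝ)) :
    |u 0| ≤ ‖(quotientShift (fun k => 2 ^ nextGap A k) hw)^[a] u‖ := by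
  have h_zero : nextGap A 0 = 0 := by simpa using nextGap_neg_natCast hA₀
  have h_eval := C0Int.abs_apply_le_norm
    ((quotientShift (fun k => 2 ^ nextGap A k) hw)^[a] u) (-a)
  rw [quotientShift_iterate_apply hw (fun k => by positivity), neg_add_cancel, h_zero,
    nextGap_neg_natCast ha] at h_eval
  simpa using h_eval

theorem not_ergodic_quotientShift_two_pow_nextGap [MeasurableSpace C₀(ℤ, ℝ)]
    [BorelSpace C₀(ℤ, ℝ)] {μ : Measure C₀(ℤ, ℝ)} [IsProbabilityMeasure μ] [μ.IsOpenPosMeasure]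
    [DecidablePred (· ∈ A)] (hA₀ : 0 ∈ A) {C : ℝ}
    (hw : ∀ k, |(2 : ℝ) ^ nextGap A (k + 1) / 2 ^ nextGap A k| ≤ C) {c : ℝ≥0∞} (hc : c ≠ 0)
    (hA : ∃ᶠ N : ℕ in atTop, c * N ≤ {n ∈ Finset.range N | n ∈ A}.card) :
    ¬ Ergodic (quotientShift (fun k => 2 ^ nextGap A k) hw) μ :=
  not_ergodic_of_le_comp_iterate (C0Int.continuous_apply 0).abs.lowerSemicontinuous
    (C0Int.exists_lt_abs_apply 0) measurable_norm hc hA fun _ ha u =>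
      abs_apply_zero_le_norm_iterate hA₀ hw ha u

theorem isVisitSchedule_two_pow_nextGap (hA : A.Infinite) (hA₀ : 0 ∈ A) {S : Set ℕ} {ρ : ℕ → ℕ}
    (h_sep : ∀ m ∈ S, ∀ n ∈ S, m ≠ n → ∀ a ∈ A, 2 * (ρ m + ρ n : ℤ) < |(m - n - a : ℤ)|)
    (h_le : ∀ n ∈ S, 4 * ρ n ≤ n) (h_density : ∀ p, 0 < lowerDensity {n ∈ S | ρ n = p}) :
    IsVisitSchedule (fun k => 2 ^ nextGap A k) S ρ where
  add_add_lt m hm n hn hmn := by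
    have := h_sep m hm n hn hmn.ne 0 hA₀
    rw [lt_abs] at this
    omega
  eventually_pow_le M := by
    filter_upwards [(finite_Icc (0 : ℤ) (2 * M)).compl_mem_cofinite] with l hl n hn hln
    have := h_le n hn
    rw [abs_le] at hln
    refine pow_le_pow_right₀ one_le_two (le_nextGap hA fun a _ _ => ?_)
    simp only [mem_compl_iff, mem_Icc, not_and_or] at hl
    omega
  pow_le m hm n hn hmn k hk := by
    refine pow_le_pow_right₀ one_le_two (le_nextGap hA fun a ha _ => ?_)
    have := h_sep m hm n hn hmn a ha
    rw [lt_abs] at this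
    rw [abs_le] at hk
    omega
  lowerDensity_pos := h_density

end NextGap

section VisitTimes

lemma padicValNat_two_lt_self {k : ℕ} (hk : k ≠ 0) : padicValNat 2 k < k :=
  Nat.lt_two_pow_self.trans_le (Nat.le_of_dvd (Nat.pos_of_ne_zero hk) pow_padicValNat_dvd)

/-- The radius of the pattern displayed at time `n`. It depends only on the block
`[16 ^ k, 16 ^ (k + 1))` containing `n`, is smaller than `k` if `k ≠ 0`, and takes each
value for a syndetic set of `k`. -/
def visitLabel (n : ℕ) : ℕ :=
  padicValNat 2 (Nat.log 16 n)

/-- The visit times: within each block `[16 ^ k, 16 ^ (k + 1))` with label `p`, the multiples of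
`16 ^ (p + 1)` up to `2 * 16 ^ k`. -/
def visitTimes : Set ℕ :=
  {n | n ≠ 0 ∧ 16 ^ (visitLabel n + 1) ∣ n ∧ n < 2 * 16 ^ Nat.log 16 n}

variable {m n : ℕ}

lemma visitLabel_lt_log (hn : n ∈ visitTimes) : visitLabel n < Nat.log 16 n := by
  refine padicValNat_two_lt_self fun h_log => ?_
  have h_dvd : 16 ∣ n := (dvd_pow_self 16 (visitLabel n).succ_ne_zero).trans hn.2.1
  have h_lt := hn.2.2
  have h_ne := hn.1
  rw [h_log] at h_lt
  omega

lemma four_mul_visitLabel_le (hn : n ∈ visitTimes) : 4 * visitLabel n ≤ n := by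
  have h_pow : 16 ^ (visitLabel n + 1) ≤ n := Nat.le_of_dvd (Nat.pos_of_ne_zero hn.1) hn.2.1
  have h_lt : visitLabel n < 16 ^ visitLabel n := Nat.lt_pow_self (by norm_num)
  rw [pow_succ] at h_pow
  omega

lemma dvd_or_sub_mem_of_mem_visitTimes (hm : m ∈ visitTimes) (hn : n ∈ visitTimes)
    (hmn : m < n) :
    visitLabel m = visitLabel n ∧ 16 ^ (visitLabel n + 1) ∣ n - m ∨
      ∃ l, visitLabel m ≤ l ∧ visitLabel n ≤ l ∧ n - m ∈ Ico (14 * 16 ^ l) (32 * 16 ^ l) := by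
  have hm_label := visitLabel_lt_log hm
  have hn_label := visitLabel_lt_log hn
  rcases (Nat.log_mono_right hmn.le : Nat.log 16 m ≤ Nat.log 16 n).eq_or_lt with h_log | h_log
  · have h_label : visitLabel m = visitLabel n := by rw [visitLabel, h_log, visitLabel]
    exact Or.inl ⟨h_label, Nat.dvd_sub hn.2.1 (h_label ▸ hm.2.1)⟩
  · obtain ⟨l, hl⟩ := Nat.exists_eq_add_one_of_ne_zero h_log.ne_bot
    refine Or.inr ⟨l, by omega, by omega, ?_⟩
    have hm_lt := hm.2.2
    have hn_lt := hn.2.2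
    have hn_ge : 16 ^ (l + 1) ≤ n := hl ▸ Nat.pow_log_le_self 16 hn.1
    have h_pow : 16 ^ Nat.log 16 m ≤ 16 ^ l := Nat.pow_le_pow_right (by norm_num) (by omega)
    rw [hl] at hn_lt
    rw [pow_succ] at hn_lt hn_ge
    exact ⟨by omega, by omega⟩

lemma mem_visitTimes_of_mem_Ico {k : ℕ} (hn : n ∈ Ico (16 ^ k) (2 * 16 ^ k))
    (h_dvd : 16 ^ (padicValNat 2 k + 1) ∣ n) :
    n ∈ visitTimes ∧ visitLabel n = padicValNat 2 k := by
  obtain ⟨hn_ge, hn_lt⟩ := hn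
  have h_log : Nat.log 16 n = k :=
    Nat.log_eq_of_pow_le_of_lt_pow hn_ge (by rw [pow_succ]; omega)
  have h_label : visitLabel n = padicValNat 2 k := by rw [visitLabel, h_log]
  exact ⟨⟨by omega, h_label ▸ h_dvd, h_log.symm ▸ hn_lt⟩, h_label⟩

lemma pow_le_card_visitTimes_inter_Icc {k : ℕ} (hk : k ≠ 0) {N : ℕ} (hN : 2 * 16 ^ k ≤ N) :
    16 ^ (k - padicValNat 2 k - 1) ≤
      Nat.card ↥({n ∈ visitTimes | visitLabel n = padicValNat 2 k} ∩ Icc 1 N) := by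
  set p := padicValNat 2 k
  have hpk : p < k := padicValNat_two_lt_self hk
  have h_pow : 16 ^ k = 16 ^ (k - p - 1) * 16 ^ (p + 1) := by
    rw [← pow_add]
    congr 1
    omega
  have h_inj : Function.Injective fun c : ℕ => 16 ^ k + c * 16 ^ (p + 1) := fun a b hab =>
    Nat.eq_of_mul_eq_mul_right (by positivity) (Nat.add_left_cancel hab)
  calc 16 ^ (k - p - 1)
      = Nat.card ↥((fun c : ℕ => 16 ^ k + c * 16 ^ (p + 1)) '' Iio (16 ^ (k - p - 1))) := by
        rw [Nat.card_image_of_injective h_inj]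
        simp
    _ ≤ _ := by
      refine Nat.card_mono ((finite_Icc 1 N).inter_of_right _) ?_
      rintro _ ⟨c, hc, rfl⟩
      have h_le : (c + 1) * 16 ^ (p + 1) ≤ 16 ^ k := h_pow ▸ Nat.mul_le_mul_right _ hc
      have h_pos : 0 < 16 ^ (p + 1) := by positivity
      rw [add_one_mul] at h_le
      dsimp only
      exact ⟨mem_visitTimes_of_mem_Ico ⟨by omega, by omega⟩
        (dvd_add (h_pow ▸ dvd_mul_left _ _) (dvd_mul_left _ _)), by omega, by omega⟩

lemma exists_padicValNat_two_eq_and_le {p L : ℕ} (hL : 2 ^ p ≤ L) :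
    ∃ k ≠ 0, padicValNat 2 k = p ∧ k ≤ L ∧ L < k + 2 ^ (p + 1) := by
  set s := (L - 2 ^ p) / 2 ^ (p + 1)
  have h_val : padicValNat 2 (2 ^ p * (2 * s + 1)) = p := by
    rw [padicValNat.mul (by positivity) (by omega), padicValNat.prime_pow,
      padicValNat.eq_zero_of_not_dvd (by omega), add_zero]
  have h_eq : 2 ^ p * (2 * s + 1) = 2 ^ (p + 1) * s + 2 ^ p := by ring
  have h_le : 2 ^ (p + 1) * s ≤ L - 2 ^ p := Nat.mul_div_le _ _
  have h_lt : L - 2 ^ p < 2 ^ (p + 1) * (s + 1) := Nat.lt_mul_div_succ _ (by positivity)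
  rw [mul_add_one] at h_lt
  exact ⟨_, by positivity, h_val, by omega, by omega⟩

theorem lowerDensity_visitTimes_pos (p : ℕ) :
    0 < lowerDensity {n ∈ visitTimes | visitLabel n = p} := by
  have h_pos : (0 : ℝ) < (16 ^ (p + 2 ^ (p + 1) + 2))⁻¹ := by positivity
  refine h_pos.trans_le (le_lowerDensity_of_eventually_le ?_)
  filter_upwards [eventually_ge_atTop (16 ^ (2 ^ p + 1))] with N hN
  have hN_ne : N ≠ 0 := by
    rintro rfl
    exact absurd hN (by simp)
  have h_log : 2 ^ p + 1 ≤ Nat.log 16 N := (Nat.le_log_iff_pow_le (by norm_num) hN_ne).2 hN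
  obtain ⟨k, hk, rfl, hk_le, hk_lt⟩ :=
    exists_padicValNat_two_eq_and_le (Nat.le_sub_one_of_lt h_log)
  set p := padicValNat 2 k
  have hpk : p < k := padicValNat_two_lt_self hk
  have hN_ge : 2 * 16 ^ k ≤ N := by
    have : 16 ^ (k + 1) ≤ N := Nat.pow_le_of_le_log hN_ne (by omega)
    rw [pow_succ] at this
    omega
  have h_count := pow_le_card_visitTimes_inter_Icc hk hN_ge
  have hN_le : N ≤ 16 ^ (k - p - 1) * 16 ^ (p + 2 ^ (p + 1) + 2) := by
    rw [← pow_add]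
    exact (Nat.lt_pow_of_log_lt (by norm_num) (by omega)).le
  rw [inv_mul_le_iff₀ (by positivity), mul_comm]
  exact_mod_cast hN_le.trans (Nat.mul_le_mul_right _ h_count)

end VisitTimes

section ReturnTimes

/-- `g` lies at distance more than `r` from every multiple of `M`. -/
def IsFarFromMultiples (M r g : ℕ) : Prop :=
  ∀ c, g + r < c * M ∨ c * M + r < g

/-- The return times: `0` and, within each block `[3 * 16 ^ t, 4 * 16 ^ t)`, the integers that
avoid all differences of visit times with a common label `p`. -/
def returnTimes : Set ℕ :=
  insert 0 {g | ∃ t, g ∈ Ico (3 * 16 ^ t) (4 * 16 ^ t) ∧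
    ∀ p < t, IsFarFromMultiples (16 ^ (p + 1)) (4 * p) g}

lemma zero_mem_returnTimes : 0 ∈ returnTimes :=
  mem_insert 0 _

lemma lt_or_lt_of_mem_returnTimes {g p D : ℕ} (hg : g ∈ returnTimes) (hD : D ≠ 0)
    (h_dvd : 16 ^ (p + 1) ∣ D) : g + 4 * p < D ∨ D + 4 * p < g := by
  have h_le : 16 ^ (p + 1) ≤ D := Nat.le_of_dvd (Nat.pos_of_ne_zero hD) h_dvd
  have hp : p < 16 ^ p := Nat.lt_pow_self (by norm_num)
  rw [pow_succ] at h_le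
  obtain rfl | ⟨t, ⟨-, hg_lt⟩, hg_far⟩ := hg
  · omega
  rcases lt_or_ge p t with hpt | htp
  · obtain ⟨c, rfl⟩ := h_dvd
    simpa only [mul_comm c] using hg_far p hpt c
  · have : 16 ^ t ≤ 16 ^ p := Nat.pow_le_pow_right (by norm_num) htp
    omega

lemma lt_sub_or_sub_lt_of_mem_returnTimes {m n g : ℕ} (hm : m ∈ visitTimes)
    (hn : n ∈ visitTimes) (hmn : m < n) (hg : g ∈ returnTimes) :
    g + 2 * (visitLabel m + visitLabel n) < n - m ∨
      n - m + 2 * (visitLabel m + visitLabel n) < g := by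
  rcases dvd_or_sub_mem_of_mem_visitTimes hm hn hmn with ⟨h_label, h_dvd⟩ | ⟨l, hml, hnl, hl⟩
  · have := lt_or_lt_of_mem_returnTimes hg (by omega) h_dvd
    omega
  obtain ⟨hl_ge, hl_lt⟩ := hl
  have h_lt : l < 16 ^ l := Nat.lt_pow_self (by norm_num)
  obtain rfl | ⟨t, ⟨hg_ge, hg_lt⟩, -⟩ := hg
  · omega
  rcases le_or_gt t l with htl | hlt
  · have : 16 ^ t ≤ 16 ^ l := Nat.pow_le_pow_right (by norm_num) htl
    omega
  · have : 16 ^ (l + 1) ≤ 16 ^ t := Nat.pow_le_pow_right (by norm_num) hlt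
    rw [pow_succ] at this
    omega

lemma lt_abs_sub_sub_of_mem_returnTimes {m n g : ℕ} (hm : m ∈ visitTimes) (hn : n ∈ visitTimes)
    (hmn : m ≠ n) (hg : g ∈ returnTimes) :
    2 * (visitLabel m + visitLabel n : ℤ) < |(m - n - g : ℤ)| := by
  rw [lt_abs]
  rcases hmn.lt_or_gt with h | h
  · have := lt_sub_or_sub_lt_of_mem_returnTimes hm hn h zero_mem_returnTimes
    omega
  · have := lt_sub_or_sub_lt_of_mem_returnTimes hn hm h hg
    omega

open Classical in
lemma card_not_isFarFromMultiples_le {M r : ℕ} (hr : r < M) (a b : ℕ) :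
    {g ∈ Finset.Ico (a * M) (b * M) | ¬ IsFarFromMultiples M r g}.card ≤
      (b + 1 - a) * (2 * r + 1) := by
  have h_subset : {g ∈ Finset.Ico (a * M) (b * M) | ¬ IsFarFromMultiples M r g} ⊆
      (Finset.Icc a b).biUnion fun c => Finset.Icc (c * M - r) (c * M + r) := by
    intro g hg
    simp only [IsFarFromMultiples, Finset.mem_filter, Finset.mem_Ico, not_forall, not_or,
      not_lt] at hg
    obtain ⟨⟨hg_ge, hg_lt⟩, c, hc_le, hc_ge⟩ := hg
    have hac : a ≤ c := by
      by_contra! hca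
      have := Nat.mul_le_mul_right M (Nat.succ_le_of_lt hca)
      rw [Nat.succ_mul] at this
      omega
    have hcb : c ≤ b := by
      by_contra! hbc
      have := Nat.mul_le_mul_right M (Nat.succ_le_of_lt hbc)
      rw [Nat.succ_mul] at this
      omega
    simp only [Finset.mem_biUnion, Finset.mem_Icc]
    exact ⟨c, ⟨hac, hcb⟩, by omega, by omega⟩
  rw [← Nat.card_Icc]
  refine (Finset.card_le_card h_subset).trans (Finset.card_biUnion_le_card_mul _ _ _ fun c _ => ?_)
  rw [Nat.card_Icc]
  omega

open Classical in
lemma card_not_isFarFromMultiples_pow_le {p t : ℕ} (hpt : p < t) :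
    {g ∈ Finset.Ico (3 * 16 ^ t) (4 * 16 ^ t) |
      ¬ IsFarFromMultiples (16 ^ (p + 1)) (4 * p) g}.card ≤ 2 * (9 ^ p * 16 ^ (t - 1 - p)) := by
  have h_pow : 16 ^ t = 16 ^ (t - 1 - p) * 16 ^ (p + 1) := by
    rw [← pow_add]
    congr 1
    omega
  have h_radius : 4 * p < 16 ^ (p + 1) := by
    have : p < 16 ^ p := Nat.lt_pow_self (by norm_num)
    rw [pow_succ]
    omega
  have h_pos : 0 < 16 ^ (t - 1 - p) := by positivity
  have h_bernoulli : 1 + p * 8 ≤ 9 ^ p := one_add_le_pow_of_two_add_nonneg (a := 8) (by norm_num) p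
  rw [h_pow, ← mul_assoc, ← mul_assoc]
  refine (card_not_isFarFromMultiples_le h_radius _ _).trans ?_
  calc (4 * 16 ^ (t - 1 - p) + 1 - 3 * 16 ^ (t - 1 - p)) * (2 * (4 * p) + 1)
      ≤ 2 * 16 ^ (t - 1 - p) * 9 ^ p := Nat.mul_le_mul (by omega) (by omega)
    _ = 2 * (9 ^ p * 16 ^ (t - 1 - p)) := by ring

open Classical in
lemma pow_le_two_mul_card_returnTimes (t : ℕ) :
    16 ^ t ≤ 2 * {g ∈ Finset.Ico (3 * 16 ^ t) (4 * 16 ^ t) | g ∈ returnTimes}.card := by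
  set I := Finset.Ico (3 * 16 ^ t) (4 * 16 ^ t)
  set bad : ℕ → Finset ℕ := fun p => {g ∈ I | ¬ IsFarFromMultiples (16 ^ (p + 1)) (4 * p) g}
  have h_cover : I ⊆ {g ∈ I | g ∈ returnTimes} ∪ (Finset.range t).biUnion bad := by
    intro g hg
    simp only [Finset.mem_union, Finset.mem_filter, Finset.mem_biUnion, Finset.mem_range, bad, hg,
      true_and]
    by_contra! h
    exact h.1 (Or.inr ⟨t, Finset.mem_Ico.1 hg, h.2⟩)
  have h_bad : 7 * ((Finset.range t).biUnion bad).card ≤ 2 * 16 ^ t :=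
    calc 7 * ((Finset.range t).biUnion bad).card
        ≤ 7 * ∑ p ∈ Finset.range t, 2 * (9 ^ p * 16 ^ (t - 1 - p)) := by
          gcongr
          refine Finset.card_biUnion_le.trans (Finset.sum_le_sum fun p hp => ?_)
          exact card_not_isFarFromMultiples_pow_le (Finset.mem_range.1 hp)
      _ = 2 * ((∑ p ∈ Finset.range t, 9 ^ p * 16 ^ (t - 1 - p)) * (16 - 9)) := by
          rw [← Finset.mul_sum]
          ring
      _ = 2 * (16 ^ t - 9 ^ t) := by rw [geom_sum₂_mul_of_le (by norm_num)]
      _ ≤ 2 * 16 ^ t := by gcongr; exact Nat.sub_le _ _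
  have h_card : I.card = 16 ^ t := by
    rw [Nat.card_Ico]
    omega
  have h_le := (Finset.card_le_card h_cover).trans (Finset.card_union_le _ _)
  omega

lemma infinite_returnTimes : returnTimes.Infinite := by
  classical
  refine infinite_of_forall_exists_gt fun t => ?_
  have h_count := pow_le_two_mul_card_returnTimes t
  have h_lt : t < 16 ^ t := Nat.lt_pow_self (by norm_num)
  obtain ⟨g, hg⟩ := Finset.card_pos.1 (by omega :
    0 < {g ∈ Finset.Ico (3 * 16 ^ t) (4 * 16 ^ t) | g ∈ returnTimes}.card)
  rw [Finset.mem_filter, Finset.mem_Ico] at hg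
  exact ⟨g, hg.2, by omega⟩

open Classical in
lemma frequently_mul_le_card_returnTimes :
    ∃ᶠ N : ℕ in atTop, 8⁻¹ * (N : ℝ≥0∞) ≤ {n ∈ Finset.range N | n ∈ returnTimes}.card := by
  refine frequently_atTop.2 fun t => ⟨4 * 16 ^ t, ?_, ?_⟩
  · have : t < 16 ^ t := Nat.lt_pow_self (by norm_num)
    omega
  have h_subset : {g ∈ Finset.Ico (3 * 16 ^ t) (4 * 16 ^ t) | g ∈ returnTimes} ⊆
      {n ∈ Finset.range (4 * 16 ^ t) | n ∈ returnTimes} :=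
    Finset.filter_subset_filter _ fun g hg => Finset.mem_range.2 (Finset.mem_Ico.1 hg).2
  have h_count := pow_le_two_mul_card_returnTimes t
  have h_card := Finset.card_le_card h_subset
  rw [ENNReal.inv_mul_le_iff (by norm_num) (by norm_num)]
  exact_mod_cast (by omega : 4 * 16 ^ t ≤ 8 * _)

end ReturnTimes

/-- There exists a bounded linear operator `T` on the Banach space
`c₀(ℤ)` of two-sided real sequences vanishing at infinity (with the sup norm), here
realized as `C₀(ℤ, ℝ)`, which is frequently hypercyclic but admits no ergodic
`T`-invariant Borel probability measure with full support. -/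
theorem stmt3 :
    letI : MeasurableSpace C₀(ℤ, ℝ) := borel C₀(ℤ, ℝ)
    ∃ T : C₀(ℤ, ℝ) →L[ℝ] C₀(ℤ, ℝ),
      (∃ x : C₀(ℤ, ℝ), FreqHypPt (⇑T) x) ∧
      ¬ ∃ μ : Measure C₀(ℤ, ℝ), IsProbabilityMeasure μ ∧ Ergodic (⇑T) μ ∧
          ∀ U : Set C₀(ℤ, ℝ), IsOpen U → U.Nonempty → 0 < μ U := by
  classical
  let _ : MeasurableSpace C₀(ℤ, ℝ) := borel C₀(ℤ, ℝ)
  have : BorelSpace C₀(ℤ, ℝ) := ⟨rfl⟩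
  have h_bound := abs_two_pow_nextGap_div_le infinite_returnTimes
  have h_schedule : IsVisitSchedule (fun k => 2 ^ nextGap returnTimes k) visitTimes visitLabel :=
    isVisitSchedule_two_pow_nextGap infinite_returnTimes zero_mem_returnTimes
      (fun _ hm _ hn hmn _ => lt_abs_sub_sub_of_mem_returnTimes hm hn hmn)
      (fun _ => four_mul_visitLabel_le) lowerDensity_visitTimes_pos
  refine ⟨quotientShift _ h_bound, h_schedule.exists_freqHypPt (fun k => by positivity) h_bound, ?_⟩
  rintro ⟨μ, _, h_ergodic, h_supp⟩
  have : μ.IsOpenPosMeasure := ⟨fun U hU hU_ne => (h_supp U hU hU_ne).ne'⟩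
  exact not_ergodic_quotientShift_two_pow_nextGap zero_mem_returnTimes h_bound
    (by norm_num : (8⁻¹ : ℝ≥0∞) ≠ 0) frequently_mul_le_card_returnTimes h_ergodic
end

section
/- Let X be a separable Banach space and let T : X → X be a hypercyclic bounded linear operator. If T admits an ergodic T-invariant Borel probability measure with full support, then c(T) = 1. -/
open MeasureTheory Filter Topology Set Metric

/-- The upper density of a set of natural numbers:
`limsup_{N→∞} #(A ∩ [1,N]) / N`. -/
noncomputable def upperDensity (A : Set ℕ) : ℝ :=
  Filter.limsup (fun N : ℕ => (Nat.card ↥(A ∩ Set.Icc 1 N) : ℝ) / N) Filter.atTop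

/-- `x` is a hypercyclic point for `T`: its orbit is dense. -/
def HypPt {X : Type*} [TopologicalSpace X] (T : X → X) (x : X) : Prop :=
  Dense (Set.range fun n : ℕ => T^[n] x)

/-- The parameter `c(T)`:
`c(T) = sup_{R>0} sup_{x ∈ HC(T)} upperDensity {n | T^[n] x ∈ B̄(0,R)}`. -/
noncomputable def cConst {X : Type*} [NormedAddCommGroup X] (T : X → X) : ℝ :=
  sSup {c : ℝ | ∃ R : ℝ, 0 < R ∧ ∃ x : X, HypPt T x ∧
    c = upperDensity {n : ℕ | T^[n] x ∈ Metric.closedBall 0 R}}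

/-!
Ergodicity and full support make almost every orbit meet every member of a countable basis, so
almost every point is hypercyclic. By invariance, the proportion of the times `1, …, N` at which
the orbit of `x` visits a set `B` has mean `μ B`; letting `N → ∞`, the reverse Fatou lemma bounds
`μ B` by the mean of the upper density of the visiting times. Hence some hypercyclic point visits
`B` with upper density at least `μ B`, and for large closed balls this tends to `1`.
-/

section Density

/-- The proportion of `[1, N]` that lies in `A`; the upper density of `A` is its limit superior as
`N → ∞`. It is `0` for `N = 0`. -/
noncomputable def partialDensity (A : Set ℕ) (N : ℕ) : ℝ :=
  (Nat.card ↥(A ∩ Set.Icc 1 N) : ℝ) / N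

variable (A : Set ℕ)

lemma partialDensity_nonneg (N : ℕ) : 0 ≤ partialDensity A N := by
  unfold partialDensity
  positivity

lemma partialDensity_le_one (N : ℕ) : partialDensity A N ≤ 1 := by
  refine div_le_one_of_le₀ (Nat.cast_le.2 ?_) N.cast_nonneg
  calc Nat.card ↥(A ∩ Set.Icc 1 N)
      ≤ Nat.card ↥(Set.Icc 1 N) := Nat.card_mono (finite_Icc 1 N) inter_subset_right
    _ = N := by simp

lemma isBoundedUnder_le_partialDensity : IsBoundedUnder (· ≤ ·) atTop (partialDensity A) :=
  isBoundedUnder_of ⟨1, partialDensity_le_one A⟩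

lemma isCoboundedUnder_le_partialDensity : IsCoboundedUnder (· ≤ ·) atTop (partialDensity A) :=
  IsBoundedUnder.isCoboundedUnder_le (isBoundedUnder_of ⟨0, partialDensity_nonneg A⟩)

lemma upperDensity_le_one : upperDensity A ≤ 1 :=
  limsup_le_of_le (isCoboundedUnder_le_partialDensity A)
    (Eventually.of_forall (partialDensity_le_one A))

lemma upperDensity_nonneg : 0 ≤ upperDensity A :=
  le_limsup_of_frequently_le (Frequently.of_forall (partialDensity_nonneg A))
    (isBoundedUnder_le_partialDensity A)

lemma ofReal_upperDensity :
    ENNReal.ofReal (upperDensity A) =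
      limsup (fun N => ENNReal.ofReal (partialDensity A N)) atTop :=
  ENNReal.ofReal_limsup (isCoboundedUnder_le_partialDensity A) (isBoundedUnder_le_partialDensity A)

lemma card_inter_Icc_eq_sum_indicator (N : ℕ) :
    (Nat.card ↥(A ∩ Set.Icc 1 N) : ENNReal) = ∑ n ∈ Finset.Icc 1 N, A.indicator 1 n := by
  classical
  have h_filter : A ∩ Set.Icc 1 N = ↑{n ∈ Finset.Icc 1 N | n ∈ A} := by
    ext n
    simp only [mem_inter_iff, mem_Icc, Finset.coe_filter, Finset.mem_Icc, mem_ofPred_eq]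
    exact and_comm
  rw [h_filter, Nat.card_coe_set_eq, Set.ncard_coe_finset, Finset.card_filter]
  simp [Set.indicator_apply]

lemma ofReal_partialDensity {N : ℕ} (hN : N ≠ 0) :
    ENNReal.ofReal (partialDensity A N) = (∑ n ∈ Finset.Icc 1 N, A.indicator 1 n) / N := by
  rw [partialDensity, ENNReal.ofReal_div_of_pos (by positivity), ENNReal.ofReal_natCast,
    ENNReal.ofReal_natCast, card_inter_Icc_eq_sum_indicator]

end Density

section Visits

variable {X : Type*} {T : X → X} {B : Set X}

lemma ofReal_partialDensity_visits {N : ℕ} (hN : N ≠ 0) (x : X) :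
    ENNReal.ofReal (partialDensity {n | T^[n] x ∈ B} N) =
      (∑ n ∈ Finset.Icc 1 N, (T^[n] ⁻¹' B).indicator 1 x) / N :=
  ofReal_partialDensity _ hN

variable [MeasurableSpace X] {μ : Measure X}

lemma measurable_indicator_iterate_preimage (hT : Measurable T) (hB : MeasurableSet B) (n : ℕ) :
    Measurable ((T^[n] ⁻¹' B).indicator (1 : X → ENNReal)) :=
  measurable_one.indicator (hT.iterate n hB)

lemma measurable_ofReal_partialDensity_visits (hT : Measurable T) (hB : MeasurableSet B) (N : ℕ) :
    Measurable fun x => ENNReal.ofReal (partialDensity {n | T^[n] x ∈ B} N) := by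
  rcases eq_or_ne N 0 with rfl | hN
  · simp [partialDensity]
  · simp only [ofReal_partialDensity_visits hN]
    exact (Finset.measurable_fun_sum _ fun n _ =>
      measurable_indicator_iterate_preimage hT hB n).div_const _

lemma lintegral_partialDensity_visits (hT : MeasurePreserving T μ μ) (hB : MeasurableSet B)
    {N : ℕ} (hN : N ≠ 0) :
    ∫⁻ x, ENNReal.ofReal (partialDensity {n | T^[n] x ∈ B} N) ∂μ = μ B := by
  have h_meas := measurable_indicator_iterate_preimage hT.measurable hB
  have h_term (n : ℕ) : ∫⁻ x, (T^[n] ⁻¹' B).indicator 1 x ∂μ = μ B := by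
    rw [lintegral_indicator_one ((hT.iterate n).measurable hB),
      (hT.iterate n).measure_preimage hB.nullMeasurableSet]
  calc ∫⁻ x, ENNReal.ofReal (partialDensity {n | T^[n] x ∈ B} N) ∂μ
      = (∑ n ∈ Finset.Icc 1 N, ∫⁻ x, (T^[n] ⁻¹' B).indicator 1 x ∂μ) / N := by
        simp only [ofReal_partialDensity_visits hN, div_eq_mul_inv]
        rw [lintegral_mul_const _ (Finset.measurable_fun_sum _ fun n _ => h_meas n),
          lintegral_finsetSum _ fun n _ => h_meas n]
    _ = N * μ B / N := by simp [h_term]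
    _ = μ B := by
        rw [mul_comm, ENNReal.mul_div_cancel_right (by simpa) (by simp)]

theorem measure_le_lintegral_upperDensity_visits [IsFiniteMeasure μ]
    (hT : MeasurePreserving T μ μ) (hB : MeasurableSet B) :
    μ B ≤ ∫⁻ x, ENNReal.ofReal (upperDensity {n | T^[n] x ∈ B}) ∂μ := by
  have h_mean : (fun N => ∫⁻ x, ENNReal.ofReal (partialDensity {n | T^[n] x ∈ B} N) ∂μ)
      =ᶠ[atTop] fun _ => μ B := by
    filter_upwards [eventually_ne_atTop 0] with N hN
    exact lintegral_partialDensity_visits hT hB hN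
  calc μ B
      = limsup (fun N => ∫⁻ x, ENNReal.ofReal (partialDensity {n | T^[n] x ∈ B} N) ∂μ) atTop := by
        rw [limsup_congr h_mean, limsup_const]
    _ ≤ ∫⁻ x, limsup (fun N => ENNReal.ofReal (partialDensity {n | T^[n] x ∈ B} N)) atTop ∂μ :=
        limsup_lintegral_le (fun _ => 1) (measurable_ofReal_partialDensity_visits hT.measurable hB)
          (fun N => Eventually.of_forall fun _ =>
            ENNReal.ofReal_le_one.2 (partialDensity_le_one _ N))
          (by simp)
    _ = ∫⁻ x, ENNReal.ofReal (upperDensity {n | T^[n] x ∈ B}) ∂μ := by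
        simp only [ofReal_upperDensity]

theorem exists_measureReal_le_upperDensity_visits [IsProbabilityMeasure μ]
    (hT : MeasurePreserving T μ μ) (hB : MeasurableSet B) {p : X → Prop} (hp : ∀ᵐ x ∂μ, p x) :
    ∃ x, p x ∧ μ.real B ≤ upperDensity {n | T^[n] x ∈ B} := by
  have h_finite : ∫⁻ x, ENNReal.ofReal (upperDensity {n | T^[n] x ∈ B}) ∂μ ≠ ⊤ := by
    refine ne_top_of_le_ne_top ENNReal.one_ne_top ?_
    calc ∫⁻ x, ENNReal.ofReal (upperDensity {n | T^[n] x ∈ B}) ∂μ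
        ≤ ∫⁻ _, 1 ∂μ := lintegral_mono fun _ => ENNReal.ofReal_le_one.2 (upperDensity_le_one _)
      _ = 1 := by simp
  obtain ⟨x, hx, h_le⟩ := exists_notMem_null_lintegral_le h_finite (ae_iff.1 hp)
  have h_measure := (measure_le_lintegral_upperDensity_visits hT hB).trans h_le
  exact ⟨x, not_not.1 hx, ENNReal.toReal_le_of_le_ofReal (upperDensity_nonneg _) h_measure⟩

end Visits

section Ergodic

variable {X : Type*} [MeasurableSpace X] {T : X → X} {μ : Measure X} [IsFiniteMeasure μ]

lemma ae_exists_iterate_mem (hT : Ergodic T μ) {s : Set X} (hs : NullMeasurableSet s μ)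
    (hs₀ : μ s ≠ 0) : ∀ᵐ x ∂μ, ∃ n, T^[n] x ∈ s := by
  set E : Set X := ⋃ n, T^[n] ⁻¹' s with hE
  have h_meas : NullMeasurableSet E μ := .iUnion fun n =>
    hs.preimage (hT.toMeasurePreserving.iterate n).quasiMeasurePreserving
  have h_preimage : T ⁻¹' E ⊆ E := by
    rw [hE, preimage_iUnion]
    exact iUnion_subset fun n => subset_iUnion (fun n => T^[n] ⁻¹' s) (n + 1)
  have h_subset : s ⊆ E := subset_iUnion (fun n => T^[n] ⁻¹' s) 0
  rcases hT.ae_empty_or_univ_of_preimage_ae_le h_meas h_preimage.eventuallyLE with h_empty | h_univ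
  · exact absurd (measure_mono_null h_subset (ae_eq_empty.1 h_empty)) hs₀
  · filter_upwards [eventuallyEq_univ.1 h_univ] with x hx using mem_iUnion.1 hx

theorem ae_hypPt [TopologicalSpace X] [SecondCountableTopology X] [OpensMeasurableSpace X]
    [μ.IsOpenPosMeasure] (hT : Ergodic T μ) : ∀ᵐ x ∂μ, HypPt T x := by
  obtain ⟨b, hb_countable, hb_empty, hb⟩ := TopologicalSpace.exists_countable_basis X
  have h_visit : ∀ U ∈ b, ∀ᵐ x ∂μ, ∃ n, T^[n] x ∈ U := fun U hU =>
    have hU_open := hb.isOpen hU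
    ae_exists_iterate_mem hT hU_open.measurableSet.nullMeasurableSet
      (hU_open.measure_ne_zero μ (nonempty_iff_ne_empty.2 (ne_of_mem_of_not_mem hU hb_empty)))
  filter_upwards [(ae_ball_iff hb_countable).2 h_visit] with x hx
  refine hb.dense_iff.2 fun U hU _ => ?_
  obtain ⟨n, hn⟩ := hx U hU
  exact ⟨T^[n] x, hn, n, rfl⟩

end Ergodic

lemma tendsto_measure_closedBall_atTop {X : Type*} [PseudoMetricSpace X] [MeasurableSpace X]
    (μ : Measure X) (x : X) : Tendsto (fun R => μ (closedBall x R)) atTop (𝓝 (μ univ)) := by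
  have h_univ : ⋃ R, closedBall x R = univ :=
    iUnion_eq_univ_iff.2 fun y => ⟨dist y x, mem_closedBall.2 le_rfl⟩
  rw [← h_univ]
  exact tendsto_measure_iUnion_atTop fun _ _ => closedBall_subset_closedBall

section CConst

variable {X : Type*} [NormedAddCommGroup X] {T : X → X}

lemma cConst_le_one (T : X → X) : cConst T ≤ 1 := by
  refine Real.sSup_le ?_ zero_le_one
  rintro _ ⟨R, -, x, -, rfl⟩
  exact upperDensity_le_one _

lemma upperDensity_visits_closedBall_le_cConst {x : X} (hx : HypPt T x) {R : ℝ} (hR : 0 < R) :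
    upperDensity {n | T^[n] x ∈ closedBall 0 R} ≤ cConst T := by
  refine le_csSup ⟨1, ?_⟩ ⟨R, hR, x, hx, rfl⟩
  rintro _ ⟨R, -, x, -, rfl⟩
  exact upperDensity_le_one _

theorem stmt4_general [TopologicalSpace.SeparableSpace X] [MeasurableSpace X]
    [OpensMeasurableSpace X] (μ : Measure X) [IsProbabilityMeasure μ] [μ.IsOpenPosMeasure]
    (hT : Ergodic T μ) : cConst T = 1 := by
  have : SecondCountableTopology X := UniformSpace.secondCountable_of_separable X
  refine le_antisymm (cConst_le_one T) ?_
  have h_ball : ∀ R > 0, μ.real (closedBall 0 R) ≤ cConst T := fun R hR => by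
    obtain ⟨x, hx, h_le⟩ := exists_measureReal_le_upperDensity_visits hT.toMeasurePreserving
      (measurableSet_closedBall (x := (0 : X)) (ε := R)) (ae_hypPt hT)
    exact h_le.trans (upperDensity_visits_closedBall_le_cConst hx hR)
  have h_lim : Tendsto (fun R => μ.real (closedBall 0 R)) atTop (𝓝 1) := by
    simpa [Function.comp_def, measureReal_def] using
      (ENNReal.tendsto_toReal (measure_ne_top μ univ)).comp
        (tendsto_measure_closedBall_atTop μ 0)
  exact le_of_tendsto h_lim ((eventually_gt_atTop 0).mono h_ball)

end CConst

/-- Let `X` be a separable Banach space and `T` a hypercyclic bounded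
linear operator on `X`. If `T` admits an ergodic invariant Borel probability measure
with full support, then `c(T) = 1`. -/
theorem stmt4 {X : Type*} [NormedAddCommGroup X] [NormedSpace ℝ X] [CompleteSpace X]
    [TopologicalSpace.SeparableSpace X] [MeasurableSpace X] [BorelSpace X]
    (T : X →L[ℝ] X) (hhc : ∃ x : X, HypPt (⇑T) x)
    (herg : ∃ μ : Measure X, IsProbabilityMeasure μ ∧ Ergodic (⇑T) μ ∧
      ∀ U : Set X, IsOpen U → U.Nonempty → 0 < μ U) :
    cConst (⇑T) = 1 := by
  obtain ⟨μ, _, hT, h_open⟩ := herg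
  have : μ.IsOpenPosMeasure := ⟨fun U hU h_nonempty => (h_open U hU h_nonempty).ne'⟩
  exact stmt4_general μ hT
end

section
/- Let X be a Hausdorff topological space, let T : X → X be a continuous map, and let a ∈ X. Suppose there exist x ∈ X and a set D ⊆ ℕ with positive upper density such that T^i x → a as i → ∞ along D. Then a is a periodic point of T, i.e. T^q a = a for some q ≥ 1. -/
open Filter Topology Set

/-!
If `D` had only finitely many pairs at each distance `q ≥ 1`, then for every `k` a tail of `D` would
be `k`-separated, so `D` would have upper density at most `1 / k`. Hence positive upper density
gives a `q ≥ 1` with `i, i + q ∈ D` for infinitely many `i`. Along these `i`, the sequence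
`T^[i + q] x = T^[q] (T^[i] x)` tends both to `a` and to `T^[q] a`.
-/

theorem ncard_le_div_add_one_of_separated {s : Set ℕ} {k N : ℕ} (hk : 0 < k) (hsN : s ⊆ Iic N)
    (hs : ∀ i ∈ s, ∀ j ∈ s, i < j → i + k ≤ j) : s.ncard ≤ N / k + 1 := by
  have hmono : StrictMonoOn (· / k) s := fun i hi j hj hij ↦ calc
    i / k < (i + k) / k := by simp [hk]
    _ ≤ j / k := Nat.div_le_div_right (hs i hi j hj hij)
  calc s.ncard ≤ (Iic (N / k)).ncard :=
        ncard_le_ncard_of_injOn (· / k) (fun i hi ↦ Nat.div_le_div_right (hsN hi)) hmono.injOn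
    _ = N / k + 1 := by simp [← Nat.card_coe_set_eq]

theorem ncard_inter_Icc_le_of_separated_from {D : Set ℕ} {k N₀ : ℕ} (hk : 0 < k)
    (hD : ∀ i ∈ D, N₀ ≤ i → ∀ j ∈ D, i < j → i + k ≤ j) (N : ℕ) :
    (D ∩ Icc 1 N).ncard ≤ N₀ + (N / k + 1) := by
  have hsub : D ∩ Icc 1 N ⊆ Iio N₀ ∪ D ∩ Icc N₀ N := fun i hi ↦
    (lt_or_ge i N₀).imp id fun h ↦ ⟨hi.1, h, hi.2.2⟩
  have htail : (D ∩ Icc N₀ N).ncard ≤ N / k + 1 :=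
    ncard_le_div_add_one_of_separated hk (fun i hi ↦ hi.2.2)
      fun i hi j hj ↦ hD i hi.1 hi.2.1 j hj.1
  calc (D ∩ Icc 1 N).ncard ≤ (Iio N₀ ∪ D ∩ Icc N₀ N).ncard :=
        ncard_le_ncard hsub ((finite_Iio N₀).union ((finite_Icc N₀ N).inter_of_right D))
    _ ≤ (Iio N₀).ncard + (D ∩ Icc N₀ N).ncard := ncard_union_le _ _
    _ ≤ N₀ + (N / k + 1) := by gcongr; simp [← Nat.card_coe_set_eq]

theorem upperDensity_le_of_ncard_le {D : Set ℕ} {c C : ℝ}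
    (h : ∀ᶠ N : ℕ in atTop, ((D ∩ Icc 1 N).ncard : ℝ) ≤ c * N + C) : upperDensity D ≤ c := by
  have hlim : Tendsto (fun N : ℕ ↦ c + C / N) atTop (𝓝 c) := by
    simpa using (tendsto_const_div_atTop_nhds_zero_nat C).const_add c
  have hle : ∀ᶠ N : ℕ in atTop, (Nat.card ↥(D ∩ Icc 1 N) : ℝ) / N ≤ c + C / N := by
    filter_upwards [h, eventually_gt_atTop 0] with N hN hpos
    rw [Nat.card_coe_set_eq, div_le_iff₀ (by positivity)]
    field_simp
    exact hN
  have hcobdd : IsCoboundedUnder (· ≤ ·) atTop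
      fun N : ℕ ↦ (Nat.card ↥(D ∩ Icc 1 N) : ℝ) / N :=
    .of_frequently_ge (a := 0) (Frequently.of_forall fun N ↦ by positivity)
  exact (limsup_le_limsup hle hcobdd hlim.isBoundedUnder_le).trans_eq hlim.limsup_eq

theorem upperDensity_le_inv_of_eventually_separated {D : Set ℕ} {k : ℕ} (hk : 0 < k)
    (hD : ∀ᶠ i in atTop, i ∈ D → ∀ j ∈ D, i < j → i + k ≤ j) : upperDensity D ≤ (k : ℝ)⁻¹ := by
  obtain ⟨N₀, hN₀⟩ := eventually_atTop.1 hD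
  refine upperDensity_le_of_ncard_le (C := N₀ + 1) (Eventually.of_forall fun N ↦ ?_)
  calc ((D ∩ Icc 1 N).ncard : ℝ) ≤ N₀ + ((N / k : ℕ) + 1) := mod_cast
        ncard_inter_Icc_le_of_separated_from hk (fun i hi hle ↦ hN₀ i hle hi) N
    _ ≤ N₀ + ((N : ℝ) / k + 1) := by gcongr; exact Nat.cast_div_le
    _ = (k : ℝ)⁻¹ * N + (N₀ + 1) := by ring

theorem exists_frequently_mem_and_add_mem {D : Set ℕ} (hD : 0 < upperDensity D) :
    ∃ q, 1 ≤ q ∧ ∃ᶠ i in atTop, i ∈ D ∧ i + q ∈ D := by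
  by_contra! hfew
  obtain ⟨k, hk, hkD⟩ := Real.exists_nat_pos_inv_lt hD
  have hgap : ∀ᶠ i in atTop, ∀ q ∈ Finset.Ico 1 k, i ∈ D → i + q ∉ D :=
    (eventually_all_finset _).2 fun q hq ↦ hfew q (Finset.mem_Ico.1 hq).1
  refine hkD.not_ge (upperDensity_le_inv_of_eventually_separated hk ?_)
  filter_upwards [hgap] with i hi hiD j hjD hij
  by_contra! hclose
  refine hi (j - i) (Finset.mem_Ico.2 ⟨by lia, by lia⟩) hiD ?_
  rwa [Nat.add_sub_of_le hij.le]

theorem iterate_eq_of_tendsto_of_frequently_add_mem {X : Type*} [TopologicalSpace X] [T2Space X]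
    {T : X → X} {a x : X} {D : Set ℕ} {q : ℕ} (hT : ContinuousAt T^[q] a)
    (hconv : Tendsto (fun i ↦ T^[i] x) (atTop ⊓ 𝓟 D) (𝓝 a))
    (hq : ∃ᶠ i in atTop, i ∈ D ∧ i + q ∈ D) : T^[q] a = a := by
  let l : Filter ℕ := atTop ⊓ 𝓟 {i | i ∈ D ∧ i + q ∈ D}
  have : l.NeBot := frequently_mem_iff_neBot.1 hq
  have hl : l ≤ atTop ⊓ 𝓟 D := inf_le_inf_left _ (principal_mono.2 fun _ hi ↦ hi.1)
  have hshift : Tendsto (· + q) l (atTop ⊓ 𝓟 D) :=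
    (tendsto_add_atTop_nat q).inf (tendsto_principal_principal.2 fun _ hi ↦ hi.2)
  have hlim_image : Tendsto (fun i ↦ T^[q] (T^[i] x)) l (𝓝 (T^[q] a)) :=
    hT.tendsto.comp (hconv.mono_left hl)
  have hlim_shift : Tendsto (fun i ↦ T^[q] (T^[i] x)) l (𝓝 a) :=
    (hconv.comp hshift).congr fun i ↦ by
      rw [Function.comp_apply, add_comm, Function.iterate_add_apply]
  exact tendsto_nhds_unique hlim_image hlim_shift

/-- Let `X` be a Hausdorff topological space, `T : X → X` continuous,
and `a ∈ X`. If there exist `x ∈ X` and a set `D ⊆ ℕ` of positive upper density such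
that `T^i x → a` as `i → ∞` along `D`, then `a` is a periodic point of `T`. -/
theorem stmt9 {X : Type*} [TopologicalSpace X] [T2Space X]
    (T : X → X) (hT : Continuous T) (a : X)
    (x : X) (D : Set ℕ) (hD : 0 < upperDensity D)
    (hconv : Filter.Tendsto (fun i : ℕ => T^[i] x)
      (Filter.atTop ⊓ Filter.principal D) (nhds a)) :
    ∃ q : ℕ, 1 ≤ q ∧ T^[q] a = a := by
  obtain ⟨q, hq, hpairs⟩ := exists_frequently_mem_and_add_mem hD
  have hcont : ContinuousAt T^[q] a := (hT.iterate q).continuousAt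
  exact ⟨q, hq, iterate_eq_of_tendsto_of_frequently_add_mem hcont hconv hpairs⟩
end

section
/- Let X be a Polish space and T : X → X a continuous map. Then the set P_{T,*}(X) of T-invariant Borel probability measures on X with full support is a G_δ subset of P_T(X); moreover, if P_{T,*}(X) is nonempty, then it is a dense G_δ subset of P_T(X). -/
open MeasureTheory Filter Topology Set

/-- The set `P_T(X)` of `T`-invariant Borel probability measures on `X`, inside the
space `P(X)` of Borel probability measures with the topology of weak convergence. -/
def invariantProbMeasures {X : Type*} [TopologicalSpace X] [MeasurableSpace X]
    (T : X → X) : Set (ProbabilityMeasure X) :=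
  {ν | (ν : Measure X).map T = ν}

/-!
For a countable basis `B`, full support means that every nonempty member of `B` has positive mass;
each of these countably many conditions is open, because `μ ↦ μ V` is lower semicontinuous for
open `V` by the portmanteau theorem. For density, the segment from a fully supported invariant
measure `μ` to an arbitrary invariant measure `ν` consists of invariant measures, all of full
support except possibly `ν` itself.
-/

open TopologicalSpace unitInterval

section FullSupport

variable {X : Type*} [TopologicalSpace X] [MeasurableSpace X]

lemma isOpenPosMeasure_iff_of_isTopologicalBasis {μ : Measure X} {B : Set (Set X)}
    (hB : IsTopologicalBasis B) :
    μ.IsOpenPosMeasure ↔ ∀ V ∈ B, V.Nonempty → 0 < μ V := by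
  refine ⟨fun _ V hV hne ↦ (hB.isOpen hV).measure_pos μ hne, fun h ↦ ⟨fun U hU hne ↦ ?_⟩⟩
  obtain ⟨V, hVB, hVne, hVU⟩ := hB.exists_nonempty_subset hne hU
  exact ((h V hVB hVne).trans_le (measure_mono hVU)).ne'

variable (X) in
/-- The set `P_*(X)` of Borel probability measures on `X` with full support, inside the space
`P(X)`; full support is expressed by Mathlib's class `IsOpenPosMeasure`. -/
def fullSupportProbMeasures : Set (ProbabilityMeasure X) :=
  {μ | (μ : Measure X).IsOpenPosMeasure}

lemma mem_fullSupportProbMeasures_iff {μ : ProbabilityMeasure X} :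
    μ ∈ fullSupportProbMeasures X ↔
      ∀ U : Set X, IsOpen U → U.Nonempty → 0 < (μ : Measure X) U :=
  isOpenPosMeasure_iff_of_isTopologicalBasis isTopologicalBasis_opens

variable [OpensMeasurableSpace X] [HasOuterApproxClosed X]

lemma lowerSemicontinuous_measure_of_isOpen {U : Set X} (hU : IsOpen U) :
    LowerSemicontinuous fun μ : ProbabilityMeasure X ↦ (μ : Measure X) U :=
  lowerSemicontinuous_iff_le_liminf.2 fun _ ↦
    ProbabilityMeasure.le_liminf_measure_open_of_tendsto tendsto_id hU

lemma isGδ_fullSupportProbMeasures [SecondCountableTopology X] :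
    IsGδ (fullSupportProbMeasures X) := by
  simp only [fullSupportProbMeasures,
    isOpenPosMeasure_iff_of_isTopologicalBasis (isBasis_countableBasis X), ofPred_forall]
  refine .biInter (countable_countableBasis X) fun V hV ↦ .iInter_of_isOpen fun _ ↦ ?_
  exact (lowerSemicontinuous_measure_of_isOpen (isOpen_of_mem_countableBasis hV)).isOpen_preimage 0

end FullSupport

section ConvexComb

variable {X : Type*} [MeasurableSpace X]

/-- The convex combination `t μ + (1 - t) ν` of two probability measures, used to join them by a
segment in the space of probability measures; the weight `t` is that of the first measure, so the
segment starts at `ν`. -/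
noncomputable def convexComb (μ ν : ProbabilityMeasure X) (t : I) : ProbabilityMeasure X :=
  ⟨toNNReal t • (μ : Measure X) + toNNReal (σ t) • (ν : Measure X), inferInstance⟩

lemma toMeasure_convexComb (μ ν : ProbabilityMeasure X) (t : I) :
    (convexComb μ ν t : Measure X) =
      toNNReal t • (μ : Measure X) + toNNReal (σ t) • (ν : Measure X) :=
  rfl

lemma convexComb_zero (μ ν : ProbabilityMeasure X) : convexComb μ ν 0 = ν :=
  Subtype.ext <| by simp [toMeasure_convexComb]

lemma measurePreserving_convexComb {T : X → X} {μ ν : ProbabilityMeasure X}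
    (hμ : MeasurePreserving T (μ : Measure X) μ) (hν : MeasurePreserving T (ν : Measure X) ν)
    (t : I) : MeasurePreserving T (convexComb μ ν t : Measure X) (convexComb μ ν t) :=
  (hμ.smul_measure _).add_measure (hν.smul_measure _)

variable [TopologicalSpace X]

lemma convexComb_mem_fullSupportProbMeasures {μ : ProbabilityMeasure X}
    (hμ : μ ∈ fullSupportProbMeasures X) (ν : ProbabilityMeasure X) {t : I} (ht : t ≠ 0) :
    convexComb μ ν t ∈ fullSupportProbMeasures X := by
  have : (μ : Measure X).IsOpenPosMeasure := hμ
  have hle : toNNReal t • (μ : Measure X) ≤ convexComb μ ν t := Measure.le_add_right le_rfl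
  have ht₀ : (toNNReal t : ENNReal) ≠ 0 := by
    simpa [← NNReal.coe_eq_zero] using ht
  have := Measure.isOpenPosMeasure_smul (μ : Measure X) ht₀
  exact hle.isOpenPosMeasure

lemma continuous_convexComb [OpensMeasurableSpace X] (μ ν : ProbabilityMeasure X) :
    Continuous (convexComb μ ν) := by
  refine (ProbabilityMeasure.toFiniteMeasure_isEmbedding X).continuous_iff.2 ?_
  change Continuous fun t ↦ toNNReal t • μ.toFiniteMeasure + toNNReal (σ t) • ν.toFiniteMeasure
  fun_prop

lemma subset_closure_inter_fullSupportProbMeasures [OpensMeasurableSpace X]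
    {S : Set (ProbabilityMeasure X)} (hS : ∀ μ ∈ S, ∀ ν ∈ S, ∀ t, convexComb μ ν t ∈ S)
    (hne : (S ∩ fullSupportProbMeasures X).Nonempty) :
    S ⊆ closure (S ∩ fullSupportProbMeasures X) := by
  obtain ⟨μ, hμS, hμ⟩ := hne
  intro ν hνS
  have hmaps : MapsTo (convexComb μ ν) {0}ᶜ (S ∩ fullSupportProbMeasures X) :=
    fun t ht ↦ ⟨hS μ hμS ν hνS t, convexComb_mem_fullSupportProbMeasures hμ ν ht⟩
  simpa only [convexComb_zero] using
    map_mem_closure (continuous_convexComb μ ν) (dense_compl_singleton 0 0) hmaps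

end ConvexComb

section Invariant

variable {X : Type*} [TopologicalSpace X] [MeasurableSpace X] {T : X → X}

lemma convexComb_mem_invariantProbMeasures (hT : Measurable T) {μ ν : ProbabilityMeasure X}
    (hμ : μ ∈ invariantProbMeasures T) (hν : ν ∈ invariantProbMeasures T) (t : I) :
    convexComb μ ν t ∈ invariantProbMeasures T :=
  (measurePreserving_convexComb ⟨hT, hμ⟩ ⟨hT, hν⟩ t).map_eq

lemma dense_preimage_coe_fullSupportProbMeasures [OpensMeasurableSpace X] (hT : Measurable T)
    (hne : (invariantProbMeasures T ∩ fullSupportProbMeasures X).Nonempty) :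
    Dense (((↑) : invariantProbMeasures T → ProbabilityMeasure X) ⁻¹'
      fullSupportProbMeasures X) := by
  rw [Subtype.dense_iff, Subtype.image_preimage_coe]
  exact subset_closure_inter_fullSupportProbMeasures
    (fun _ hμ _ hν ↦ convexComb_mem_invariantProbMeasures hT hμ hν) hne

end Invariant

theorem stmt10_general {X : Type*} [TopologicalSpace X] [SecondCountableTopology X]
    [HasOuterApproxClosed X] [MeasurableSpace X] [OpensMeasurableSpace X]
    (T : X → X) (hT : Measurable T) :
    IsGδ {μ : ↥(invariantProbMeasures T) |
        ∀ U : Set X, IsOpen U → U.Nonempty → 0 < (↑μ.1 : Measure X) U} ∧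
      ({μ : ↥(invariantProbMeasures T) |
          ∀ U : Set X, IsOpen U → U.Nonempty → 0 < (↑μ.1 : Measure X) U}.Nonempty →
        Dense {μ : ↥(invariantProbMeasures T) |
          ∀ U : Set X, IsOpen U → U.Nonempty → 0 < (↑μ.1 : Measure X) U}) := by
  simp only [← mem_fullSupportProbMeasures_iff]
  refine ⟨isGδ_fullSupportProbMeasures.preimage continuous_subtype_val, ?_⟩
  rintro ⟨μ, hμ⟩
  exact dense_preimage_coe_fullSupportProbMeasures hT ⟨μ, μ.2, hμ⟩

/-- Let `X` be a Polish space and `T : X → X` a continuous map. The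
set `P_{T,*}(X)` of `T`-invariant Borel probability measures with full support is a
`G_δ` subset of `P_T(X)`; moreover, if it is nonempty, it is a dense `G_δ` subset of
`P_T(X)`. -/
theorem stmt10 {X : Type*} [TopologicalSpace X] [PolishSpace X]
    [MeasurableSpace X] [BorelSpace X]
    (T : X → X) (hT : Continuous T) :
    IsGδ {μ : ↥(invariantProbMeasures T) |
        ∀ U : Set X, IsOpen U → U.Nonempty → 0 < (↑μ.1 : Measure X) U} ∧
      ({μ : ↥(invariantProbMeasures T) |
          ∀ U : Set X, IsOpen U → U.Nonempty → 0 < (↑μ.1 : Measure X) U}.Nonempty →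
        Dense {μ : ↥(invariantProbMeasures T) |
          ∀ U : Set X, IsOpen U → U.Nonempty → 0 < (↑μ.1 : Measure X) U}) :=
  stmt10_general T hT.measurable
end

section
/- Let X be a separable Banach space, T : X → X a bounded linear operator, M ⊆ P_T(X) an adequate family of T-invariant measures, and p ∈ (0,∞). Assume there exists a finite constant C such that for every backward T-invariant nonempty open set Ω ⊆ X, one can find μ ∈ M with μ(Ω) = 1 and ∫_X ‖x‖^p dμ(x) ≤ C. Then there exists a measure m in the closure of M in P(X) such that m(HC(T)) = 1 and ∫_X ‖x‖^p dm(x) < ∞; in particular, T admits an ergodic T-invariant Borel probability measure μ with full support such that ∫_X ‖x‖^p dμ(x) < ∞. -/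
open MeasureTheory Filter Topology Set

/-- A nonempty family `M` of `T`-invariant Borel probability measures is *adequate* if
it is dilation-invariant, convolution-invariant, and every `μ ∈ M` has compact
support. -/
structure AdequateFamily {X : Type*} [TopologicalSpace X] [MeasurableSpace X]
    [AddCommGroup X] [Module ℝ X] (T : X → X) (M : Set (ProbabilityMeasure X)) :
    Prop where
  nonempty : M.Nonempty
  invariant : ∀ μ ∈ M, (↑μ : Measure X).map T = ↑μ
  dilation : ∀ μ ∈ M, ∀ r : ℝ, 0 < r →
    ∃ ν ∈ M, (↑ν : Measure X) = (↑μ : Measure X).map (fun x : X => r⁻¹ • x)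
  convolution : ∀ μ₁ ∈ M, ∀ μ₂ ∈ M, ∃ ν ∈ M,
    (↑ν : Measure X) =
      ((↑μ₁ : Measure X).prod (↑μ₂ : Measure X)).map (fun p : X × X => p.1 + p.2)
  compactSupport : ∀ μ ∈ M, ∃ K : Set X, IsCompact K ∧ (↑μ : Measure X) K = 1

/-!
By dilation, measures in `M` with arbitrarily small `p`-th moment charge fully every nonempty
backward-invariant open set `Ω`. Hence every invariant probability measure `m` satisfies
`⨆ z, m {x | x + z ∈ Ω} = 1`. Otherwise a first convolution with a small member of `M` gives `Ω`
mass close to the supremum `s` while some finite union of translates of `Ω` keeps mass beyond `s`;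
one of these translates is then charged outside `Ω`, so a second small convolution raises the mass
of `Ω` above `s`, although no mass `(m ∗ ρ) Ω` can exceed `s`. A single small convolution
therefore already gives `Ω` a mass as close to `1` as desired.

By Markov's inequality, a lower bound on the mass of an open set survives all further sufficiently
small perturbations. So the law of an almost surely convergent series of independent vectors, with
laws of fast decreasing moments, is a limit of members of `M` with finite moment that charges fully
the hitting set of each member of a countable base: almost every orbit is dense.

Conditioning on the invariant σ-algebra disintegrates this law into ergodic measures. Ergodicity
follows from the mean ergodic theorem: along a subsequence the frequencies of visits to `B`
converge almost surely to the conditional probability of `B`, so the invariant σ-algebra is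
conditionally independent of `B`. An ergodic component whose orbits are almost surely dense has
full support, because almost no orbit ever enters a null set.
-/

open scoped ENNReal

namespace HypercyclicMeasure

section Moment

lemma exists_lt_measure_compl_cthickening {E : Type*} [PseudoEMetricSpace E]
    [MeasurableSpace E] [OpensMeasurableSpace E] (m : Measure E) [IsFiniteMeasure m]
    {O : Set E} (hO : IsOpen O) {a : ℝ≥0∞} (ha : a < m O) :
    ∃ δ > 0, a < m (Metric.cthickening δ Oᶜ)ᶜ := by
  have hlim : Tendsto (fun δ => m (Metric.cthickening δ Oᶜ)ᶜ) (𝓝[>] 0) (𝓝 (m O)) := by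
    have hth := (tendsto_measure_cthickening_of_isClosed (μ := m)
      ⟨1, one_pos, measure_ne_top _ _⟩ hO.isClosed_compl).mono_left
      (nhdsWithin_le_nhds (s := Ioi 0))
    have hsub := ENNReal.Tendsto.sub tendsto_const_nhds hth (Or.inl (measure_ne_top m univ))
    simpa only [measure_compl Metric.isClosed_cthickening.measurableSet (measure_ne_top _ _),
      ← measure_compl hO.measurableSet.compl (measure_ne_top _ _), compl_compl] using hsub
  exact ((hlim.eventually_const_lt ha).and self_mem_nhdsWithin).exists.imp fun _ h => ⟨h.2, h.1⟩

lemma add_mem_of_notMem_cthickening {E : Type*} [SeminormedAddCommGroup E] {O : Set E}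
    {δ : ℝ} {x y : E}
    (hx : x ∉ Metric.cthickening δ Oᶜ) (hy : ‖y‖ ≤ δ) : x + y ∈ O := by
  by_contra h
  exact hx (Metric.mem_cthickening_of_dist_le x (x + y) δ Oᶜ h (by simpa using hy))

variable {X : Type*} [NormedAddCommGroup X] [MeasurableSpace X] {p : ℝ}

/-- The absolute moment of order `p` of a measure, as an extended nonnegative real. -/
noncomputable def moment (p : ℝ) (μ : Measure X) : ℝ≥0∞ := ∫⁻ x, ‖x‖ₑ ^ p ∂μ

/-- The mass `m O` survives small perturbations above the level `a`: whenever `x` has law `m` and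
`y` is coupled to `x` in any way, `P (x + y ∈ O) > a` as soon as `y` has `p`-th moment at most
`t`. -/
def IsStable (p : ℝ) (m : Measure X) (O : Set X) (a t : ℝ≥0∞) : Prop :=
  ∀ π : Measure (X × X), π.map Prod.fst = m → ∫⁻ q, ‖q.2‖ₑ ^ p ∂π ≤ t →
    a < π {q | q.1 + q.2 ∈ O}

lemma IsStable.mono {m : Measure X} {O : Set X} {a t s : ℝ≥0∞} (h : IsStable p m O a t)
    (hst : s ≤ t) : IsStable p m O a s :=
  fun π hπ hs => h π hπ (hs.trans hst)

variable [BorelSpace X]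

lemma moment_map_smul [NormedSpace ℝ X] (hp : 0 ≤ p) (μ : Measure X) (r : ℝ) :
    moment p (μ.map fun x => r • x) = ‖r‖ₑ ^ p * moment p μ := by
  rw [moment, lintegral_map (by fun_prop) (by fun_prop), moment,
    ← lintegral_const_mul _ (by fun_prop)]
  simp only [enorm_smul, ENNReal.mul_rpow_of_nonneg _ _ hp]

lemma exists_isStable (hp : 0 < p) (m : Measure X) [IsFiniteMeasure m] {O : Set X}
    (hO : IsOpen O) {a : ℝ≥0∞} (ha : a < m O) :
    ∃ t, 0 < t ∧ IsStable p m O a t := by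
  obtain ⟨δ, hδ, hG⟩ := exists_lt_measure_compl_cthickening m hO ha
  set G := (Metric.cthickening δ Oᶜ)ᶜ
  have hGm : MeasurableSet G := Metric.isClosed_cthickening.measurableSet.compl
  obtain ⟨b, hb0, hb⟩ := ENNReal.lt_iff_exists_add_pos_lt.1 hG
  have hδp : ENNReal.ofReal δ ^ p ≠ 0 := by simp [hδ, hp]
  have hδp' : ENNReal.ofReal δ ^ p ≠ ∞ := by simp [hδ, hp]
  refine ⟨b * ENNReal.ofReal δ ^ p, by positivity, fun π hπ hmom => ?_⟩
  have hcover : Prod.fst ⁻¹' G ⊆ {q : X × X | q.1 + q.2 ∈ O} ∪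
      {q | ENNReal.ofReal δ ^ p ≤ ‖q.2‖ₑ ^ p} := by
    rintro ⟨x, y⟩ hx
    rcases le_total ‖y‖ δ with hy | hy
    · exact Or.inl (add_mem_of_notMem_cthickening hx hy)
    · exact Or.inr (ENNReal.rpow_le_rpow
        ((ENNReal.ofReal_le_ofReal hy).trans_eq (ofReal_norm y)) hp.le)
  have hmarkov : π {q | ENNReal.ofReal δ ^ p ≤ ‖q.2‖ₑ ^ p} ≤ b :=
    (meas_ge_le_lintegral_div (by fun_prop) hδp hδp').trans
      ((ENNReal.div_le_iff hδp hδp').2 hmom)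
  have hle : m G ≤ π {q | q.1 + q.2 ∈ O} + b := by
    rw [← hπ, Measure.map_apply measurable_fst hGm]
    exact (measure_mono hcover).trans ((measure_union_le _ _).trans (by gcongr))
  exact (ENNReal.add_lt_add_iff_right ENNReal.coe_ne_top).1 (hb.trans_le hle)

variable [SecondCountableTopology X]

lemma IsStable.lt_map_add {m : Measure X} {O : Set X} {a t : ℝ≥0∞} (h : IsStable p m O a t)
    (hO : MeasurableSet O) {Ω : Type*} [MeasurableSpace Ω] {P : Measure Ω} {U V : Ω → X}
    (hU : Measurable U) (hV : Measurable V) (hlaw : P.map U = m)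
    (hmom : ∫⁻ ω, ‖V ω‖ₑ ^ p ∂P ≤ t) : a < P.map (fun ω => U ω + V ω) O := by
  have hlt : a < P.map (fun ω => (U ω, V ω)) ((fun q : X × X => q.1 + q.2) ⁻¹' O) :=
    h _ (by rw [Measure.map_map measurable_fst (hU.prodMk hV), ← hlaw]; rfl)
      (by rwa [lintegral_map (by fun_prop) (hU.prodMk hV)])
  rwa [Measure.map_apply (hU.prodMk hV) (measurable_add hO),
    ← preimage_comp, ← Measure.map_apply (measurable_add.comp (hU.prodMk hV)) hO] at hlt

lemma eventually_lt_conv (hp : 0 < p) (m : Measure X) [IsFiniteMeasure m] {O : Set X}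
    (hO : IsOpen O) {a : ℝ≥0∞} (ha : a < m O) :
    ∀ᶠ ρ : ProbabilityMeasure X in comap (fun ρ => moment p (ρ : Measure X)) (𝓝 0),
      a < (m ∗ (ρ : Measure X)) O := by
  obtain ⟨t, ht, hstable⟩ := exists_isStable hp m hO ha
  have hsmall : Tendsto (fun s => m univ * s) (𝓝 0) (𝓝 0) := by
    simpa using ENNReal.Tendsto.const_mul (tendsto_id (α := ℝ≥0∞) (x := 𝓝 0))
      (Or.inr (measure_ne_top m univ))
  filter_upwards [preimage_mem_comap (hsmall.eventually_le_const ht)] with ρ hρ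
  rw [Measure.conv, Measure.map_apply measurable_add hO.measurableSet]
  refine hstable (m.prod ρ) (by simp) ?_
  rw [lintegral_prod _ (by fun_prop)]
  simpa [mul_comm, moment] using hρ

end Moment

section Translate

lemma lowerSemicontinuous_measure_setOf_mem {α Y : Type*} [MeasurableSpace α]
    [TopologicalSpace Y] [FirstCountableTopology Y] (μ : Measure α) {U : α → Set Y}
    (hU : ∀ x, IsOpen (U x)) : LowerSemicontinuous fun y => μ {x | y ∈ U x} := by
  intro y a ha
  obtain ⟨V, hV⟩ := (𝓝 y).exists_antitone_basis
  have hcover : {x | y ∈ U x} ⊆ ⋃ n, {x | V n ⊆ U x} := fun x hx =>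
    mem_iUnion.2 (hV.mem_iff.1 ((hU x).mem_nhds hx))
  have hdir : Directed (· ⊆ ·) fun n => {x | V n ⊆ U x} :=
    Monotone.directed_le fun _ _ hmn _ hx => (hV.antitone hmn).trans hx
  obtain ⟨n, hn⟩ := lt_iSup_iff.1 (hdir.measure_iUnion ▸ ha.trans_le (measure_mono hcover))
  filter_upwards [hV.mem n] with z hz
  exact hn.trans_le (measure_mono fun x hx => hx hz)

lemma exists_finset_lt_measure_biUnion {α ι : Type*} [MeasurableSpace α] [Countable ι]
    {μ : Measure α} {s : ι → Set α} {a : ℝ≥0∞} (ha : a < μ (⋃ i, s i)) :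
    ∃ t : Finset ι, a < μ (⋃ i ∈ t, s i) := by
  have hdir : Directed (· ⊆ ·) fun t : Finset ι => ⋃ i ∈ t, s i :=
    Monotone.directed_le fun _ _ h => biUnion_subset_biUnion_left h
  rw [iUnion_eq_iUnion_finset, hdir.measure_iUnion] at ha
  exact lt_iSup_iff.1 ha

lemma iUnion_preimage_add_denseSeq_eq_univ {X : Type*} [TopologicalSpace X] [AddGroup X]
    [IsTopologicalAddGroup X] [TopologicalSpace.SeparableSpace X] {Ω : Set X}
    (hΩ : IsOpen Ω) (hne : Ω.Nonempty) :
    ⋃ i, {x | x + TopologicalSpace.denseSeq X i ∈ Ω} = univ := by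
  refine eq_univ_of_forall fun x => mem_iUnion.2 ?_
  refine (TopologicalSpace.denseRange_denseSeq X).exists_mem_open
    (hΩ.preimage (continuous_const_add x)) ?_
  obtain ⟨w, hw⟩ := hne
  exact ⟨-x + w, by simpa using hw⟩

lemma conv_apply {X : Type*} [AddMonoid X] [MeasurableSpace X] [MeasurableAdd₂ X]
    (μ ν : Measure X) [SFinite μ] [SFinite ν] {A : Set X} (hA : MeasurableSet A) :
    (μ ∗ ν) A = ∫⁻ z, μ {x | x + z ∈ A} ∂ν := by
  rw [Measure.conv, Measure.map_apply measurable_add hA,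
    Measure.prod_apply_symm (measurable_add hA)]
  rfl

lemma conv_le_iSup_measure_add_mem {X : Type*} [AddMonoid X] [MeasurableSpace X] [MeasurableAdd₂ X]
    (m ρ : Measure X) [SFinite m] [IsProbabilityMeasure ρ] {A : Set X} (hA : MeasurableSet A) :
    (m ∗ ρ) A ≤ ⨆ z, m {x | x + z ∈ A} := by
  calc (m ∗ ρ) A = ∫⁻ z, m {x | x + z ∈ A} ∂ρ := conv_apply _ _ hA
    _ ≤ ∫⁻ _, ⨆ z, m {x | x + z ∈ A} ∂ρ :=
      lintegral_mono fun z => le_iSup (fun z => m {x | x + z ∈ A}) z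
    _ = ⨆ z, m {x | x + z ∈ A} := by simp

lemma exists_lt_measure_restrict_compl {α ι : Type*} [MeasurableSpace α] {μ : Measure α}
    {A : Set α} (hA : MeasurableSet A) {t : Finset ι} {V : ι → Set α}
    {s v c : ℝ≥0∞} (hsv : s ≤ v) (hs : s ≠ ∞) (hμs : μ A ≤ s)
    (hv : v < μ (⋃ i ∈ t, V i)) (hc : t.card * c ≤ v - s) :
    ∃ i ∈ t, c < μ.restrict Aᶜ (V i) := by
  by_contra! hle
  have hout : v - s < μ.restrict Aᶜ (⋃ i ∈ t, V i) := by
    refine (ENNReal.sub_lt_iff_lt_left hs hsv).2 (hv.trans_le ?_)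
    calc μ (⋃ i ∈ t, V i)
        = μ.restrict A (⋃ i ∈ t, V i) + μ.restrict Aᶜ (⋃ i ∈ t, V i) := by
          rw [← Measure.add_apply, Measure.restrict_add_restrict_compl hA]
      _ ≤ s + μ.restrict Aᶜ (⋃ i ∈ t, V i) := by
          gcongr
          exact (measure_mono (subset_univ _)).trans (Measure.restrict_apply_univ A ▸ hμs)
  refine hout.not_ge ?_
  calc μ.restrict Aᶜ (⋃ i ∈ t, V i) ≤ ∑ i ∈ t, μ.restrict Aᶜ (V i) :=
        measure_biUnion_finset_le _ _
    _ ≤ ∑ _i ∈ t, c := Finset.sum_le_sum hle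
    _ ≤ v - s := by simpa using hc

lemma map_restrict_compl_of_preimage_subset {α : Type*} [MeasurableSpace α] {T : α → α}
    {μ : Measure α} [IsFiniteMeasure μ] (hT : MeasurePreserving T μ μ) {A : Set α}
    (hA : MeasurableSet A) (hTA : T ⁻¹' A ⊆ A) : (μ.restrict Aᶜ).map T = μ.restrict Aᶜ := by
  have hae : (T ⁻¹' A : Set α) =ᵐ[μ] A :=
    ae_eq_of_subset_of_measure_ge hTA (hT.measure_preimage hA.nullMeasurableSet).ge
      (hT.measurable hA).nullMeasurableSet (measure_ne_top _ _)
  have hres : μ.restrict Aᶜ = μ.restrict (T ⁻¹' Aᶜ) := Measure.restrict_congr_set hae.symm.compl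
  rw [hres, ← Measure.restrict_map hT.measurable hA.compl, hT.map_eq, ← hres]

lemma isOpen_setOf_lt_measure_add_mem {X : Type*} [TopologicalSpace X] [Add X] [ContinuousAdd X]
    [FirstCountableTopology X] [MeasurableSpace X] (σ : Measure X) {Ω : Set X} (hΩ : IsOpen Ω)
    (c : ℝ≥0∞) : IsOpen {z | c < σ {x | x + z ∈ Ω}} :=
  (lowerSemicontinuous_measure_setOf_mem σ fun x =>
    hΩ.preimage (continuous_const_add x)).isOpen_preimage c

variable {X : Type*} [NormedAddCommGroup X] [NormedSpace ℝ X] [MeasurableSpace X] [BorelSpace X]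

lemma preimage_setOf_lt_measure_add_mem_subset {T : X →L[ℝ] X} {σ : Measure X}
    (hσ : σ.map T = σ) {Ω : Set X} (hΩ : IsOpen Ω) (hTΩ : T ⁻¹' Ω ⊆ Ω) (c : ℝ≥0∞) :
    T ⁻¹' {z | c < σ {x | x + z ∈ Ω}} ⊆ {z | c < σ {x | x + z ∈ Ω}} := by
  intro z hz
  have hmeas : MeasurableSet {x | x + T z ∈ Ω} :=
    (hΩ.preimage (continuous_add_const (T z))).measurableSet
  have hsub : T ⁻¹' {x | x + T z ∈ Ω} ⊆ {x | x + z ∈ Ω} := fun x hx =>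
    hTΩ (by simpa only [mem_preimage, mem_ofPred_eq, map_add] using hx)
  calc c < σ {x | x + T z ∈ Ω} := hz
    _ = σ (T ⁻¹' {x | x + T z ∈ Ω}) := by
      rw [← Measure.map_apply T.continuous.measurable hmeas, hσ]
    _ ≤ σ {x | x + z ∈ Ω} := measure_mono hsub

end Translate

section Perturbation

variable {X : Type*} [NormedAddCommGroup X] [NormedSpace ℝ X] [MeasurableSpace X] [BorelSpace X]

/-- The filter of members of `M` whose `p`-th moment tends to zero. -/
noncomputable def smallMoment (p : ℝ) (M : Set (ProbabilityMeasure X)) :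
    Filter (ProbabilityMeasure X) :=
  comap (fun ρ => moment p (ρ : Measure X)) (𝓝 0) ⊓ 𝓟 M

/-- Every nonempty backward `T`-invariant open set carries, frequently along the filter `l`, the
whole mass of a probability measure. -/
def ChargesBackwardInvariant (T : X → X) (l : Filter (ProbabilityMeasure X)) : Prop :=
  ∀ Ω : Set X, IsOpen Ω → Ω.Nonempty → T ⁻¹' Ω ⊆ Ω → ∃ᶠ ρ : ProbabilityMeasure X in l,
    (ρ : Measure X) Ω = 1

variable {T : X →L[ℝ] X} {M : Set (ProbabilityMeasure X)} {p : ℝ}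

lemma chargesBackwardInvariant_smallMoment (hp : 0 < p)
    (hdil : ∀ μ ∈ M, ∀ r : ℝ, 0 < r →
      ∃ ν ∈ M, (ν : Measure X) = (μ : Measure X).map (fun x => r⁻¹ • x))
    {C : ℝ≥0∞} (hC : C ≠ ∞)
    (h : ∀ Ω : Set X, IsOpen Ω → Ω.Nonempty → T ⁻¹' Ω ⊆ Ω →
      ∃ μ ∈ M, (μ : Measure X) Ω = 1 ∧ moment p (μ : Measure X) ≤ C) :
    ChargesBackwardInvariant T (smallMoment p M) := by
  intro Ω hΩ hne hTΩ
  have hscaled : ∀ r : ℝ, 0 < r → ∃ ν ∈ M, (ν : Measure X) Ω = 1 ∧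
      moment p (ν : Measure X) ≤ ‖r⁻¹‖ₑ ^ p * C := by
    intro r hr
    have hcont : Continuous fun x : X => r⁻¹ • x := continuous_const_smul r⁻¹
    obtain ⟨μ, hμM, hμΩ, hμp⟩ := h ((fun x => r⁻¹ • x) ⁻¹' Ω) (hΩ.preimage hcont)
      (hne.preimage (MulAction.surjective (Units.mk0 r⁻¹ (inv_ne_zero hr.ne'))))
      (fun x hx => hTΩ (by simpa only [mem_preimage, map_smul] using hx))
    obtain ⟨ν, hνM, hν⟩ := hdil μ hμM r hr
    refine ⟨ν, hνM, ?_, ?_⟩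
    · rwa [hν, Measure.map_apply hcont.measurable hΩ.measurableSet]
    · rw [hν, moment_map_smul hp.le]
      gcongr
  have : Nonempty (ProbabilityMeasure X) := ⟨(hscaled 1 one_pos).choose⟩
  choose! ν hνM hνΩ hνp using hscaled
  have hlim : Tendsto (fun r : ℝ => ‖r⁻¹‖ₑ ^ p * C) atTop (𝓝 0) := by
    have hinv := (ENNReal.continuous_rpow_const (y := p)).tendsto _ |>.comp
      (tendsto_inv_atTop_zero (𝕜 := ℝ)).enorm
    simpa [hp] using ENNReal.Tendsto.mul_const hinv (Or.inr hC)
  have hpos : ∀ᶠ r : ℝ in atTop, 0 < r := eventually_gt_atTop 0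
  have htend : Tendsto ν atTop (smallMoment p M) :=
    tendsto_inf.2 ⟨tendsto_comap_iff.2 (tendsto_of_tendsto_of_tendsto_of_le_of_le'
      tendsto_const_nhds hlim (Eventually.of_forall fun _ => zero_le) (hpos.mono hνp)),
      tendsto_principal.2 (hpos.mono hνM)⟩
  exact htend.frequently (hpos.mono hνΩ).frequently

variable [SecondCountableTopology X]

lemma frequently_lt_conv {l : Filter (ProbabilityMeasure X)} (hl : ChargesBackwardInvariant T l)
    {σ : Measure X} [SFinite σ] (hσ : σ.map T = σ) {Ω : Set X} (hΩ : IsOpen Ω)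
    (hTΩ : T ⁻¹' Ω ⊆ Ω) {c : ℝ≥0∞} {z : X} (hz : c < σ {x | x + z ∈ Ω}) :
    ∃ᶠ ρ : ProbabilityMeasure X in l, c < (σ ∗ (ρ : Measure X)) Ω := by
  obtain ⟨b, hcb, hbz⟩ := exists_between hz
  refine (hl _ (isOpen_setOf_lt_measure_add_mem σ hΩ b) ⟨z, hbz⟩
    (preimage_setOf_lt_measure_add_mem_subset hσ hΩ hTΩ b)).mono fun ρ hρ => ?_
  have hmem : ∀ᵐ w ∂(ρ : Measure X), b < σ {x | x + w ∈ Ω} :=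
    (mem_ae_iff_prob_eq_one (isOpen_setOf_lt_measure_add_mem σ hΩ b).measurableSet).2 hρ
  have hae : ∀ᵐ w ∂(ρ : Measure X), b ≤ σ {x | x + w ∈ Ω} :=
    hmem.mono fun _ hw => hw.le
  calc c < b := hcb
    _ = ∫⁻ _, b ∂(ρ : Measure X) := by simp
    _ ≤ ∫⁻ w, σ {x | x + w ∈ Ω} ∂(ρ : Measure X) := lintegral_mono_ae hae
    _ = (σ ∗ (ρ : Measure X)) Ω := (conv_apply _ _ hΩ.measurableSet).symm

lemma frequently_add_lt_conv (hp : 0 < p)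
    (hl : ChargesBackwardInvariant T (smallMoment p M)) {μ : Measure X} [IsFiniteMeasure μ]
    (hμ : MeasurePreserving T μ μ) {Ω : Set X} (hΩ : IsOpen Ω) (hTΩ : T ⁻¹' Ω ⊆ Ω)
    {a c : ℝ≥0∞} (ha : a < μ Ω) {z : X} (hc : c < μ.restrict Ωᶜ {x | x + z ∈ Ω}) :
    ∃ᶠ ρ : ProbabilityMeasure X in smallMoment p M, a + c < (μ ∗ (ρ : Measure X)) Ω := by
  have hinside : ∀ᶠ ρ : ProbabilityMeasure X in smallMoment p M,
      a < (μ.restrict Ω ∗ (ρ : Measure X)) Ω :=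
    (eventually_lt_conv hp (μ.restrict Ω) hΩ
      (by rwa [Measure.restrict_apply_self])).filter_mono inf_le_left
  have houtside := frequently_lt_conv hl
    (map_restrict_compl_of_preimage_subset hμ hΩ.measurableSet hTΩ) hΩ hTΩ hc
  refine (houtside.and_eventually hinside).mono fun ρ ⟨hout, hin⟩ => ?_
  calc a + c < (μ.restrict Ω ∗ (ρ : Measure X)) Ω + (μ.restrict Ωᶜ ∗ (ρ : Measure X)) Ω :=
        ENNReal.add_lt_add hin hout
    _ = (μ ∗ (ρ : Measure X)) Ω := by
      rw [← Measure.add_apply, ← Measure.add_conv,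
        Measure.restrict_add_restrict_compl hΩ.measurableSet]

lemma iSup_measure_add_mem_eq_one (hp : 0 < p) (hinv : ∀ ρ ∈ M, (ρ : Measure X).map T = ρ)
    (hl : ChargesBackwardInvariant T (smallMoment p M)) {m : Measure X} [IsProbabilityMeasure m]
    (hm : m.map T = m) {Ω : Set X} (hΩ : IsOpen Ω) (hne : Ω.Nonempty) (hTΩ : T ⁻¹' Ω ⊆ Ω) :
    ⨆ z, m {x | x + z ∈ Ω} = 1 := by
  set s := ⨆ z, m {x | x + z ∈ Ω}
  refine (iSup_le fun z => prob_le_one).antisymm (le_of_not_gt fun hs1 => ?_)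
  obtain ⟨v, hsv, hv1⟩ := exists_between hs1
  have hs : s ≠ ∞ := hs1.ne_top
  let d := TopologicalSpace.denseSeq X
  obtain ⟨t, ht⟩ : ∃ t : Finset ℕ, v < m (⋃ i ∈ t, {x | x + d i ∈ Ω}) :=
    exists_finset_lt_measure_biUnion (by
      rwa [iUnion_preimage_add_denseSeq_eq_univ hΩ hne, measure_univ])
  have hs0 : s ≠ 0 := by
    intro h0
    have hnull : m (⋃ i ∈ t, {x | x + d i ∈ Ω}) = 0 :=
      (measure_biUnion_null_iff t.countable_toSet).2 fun i _ => ENNReal.iSup_eq_zero.1 h0 (d i)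
    exact not_lt_bot (hnull ▸ ht)
  set c := (v - s) / t.card
  have hc0 : c ≠ 0 := ENNReal.div_ne_zero.2 ⟨(tsub_pos_of_lt hsv).ne', by simp⟩
  obtain ⟨z, hz⟩ := lt_iSup_iff.1 (ENNReal.sub_lt_self hs hs0 hc0)
  have hV : IsOpen (⋃ i ∈ t, {x | x + d i ∈ Ω}) :=
    isOpen_biUnion fun i _ => hΩ.preimage (continuous_add_const (d i))
  have hgood : ∀ᶠ ρ : ProbabilityMeasure X in smallMoment p M,
      v < (m ∗ (ρ : Measure X)) (⋃ i ∈ t, {x | x + d i ∈ Ω}) ∧ ρ ∈ M :=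
    ((eventually_lt_conv hp m hV ht).filter_mono inf_le_left).and
      (eventually_inf_principal.2 (Eventually.of_forall fun _ h => h))
  obtain ⟨ρ, hρz, hρv, hρM⟩ := ((frequently_lt_conv hl hm hΩ hTΩ hz).and_eventually hgood).exists
  have hμ : MeasurePreserving T (m ∗ (ρ : Measure X)) (m ∗ (ρ : Measure X)) :=
    ⟨T.continuous.measurable, by
      rw [Measure.map_conv_continuousLinearMap, hm, hinv ρ hρM]⟩
  obtain ⟨i, -, hi⟩ := exists_lt_measure_restrict_compl hΩ.measurableSet hsv.le hs
    (conv_le_iSup_measure_add_mem m ρ hΩ.measurableSet) hρv ENNReal.mul_div_le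
  obtain ⟨ρ', hρ'⟩ := (frequently_add_lt_conv hp hl hμ hΩ hTΩ hρz hi).exists
  rw [Measure.conv_assoc] at hρ'
  exact (hρ'.trans_le (conv_le_iSup_measure_add_mem m _ hΩ.measurableSet)).not_ge le_tsub_add

lemma frequently_lt_conv_of_lt_one (hp : 0 < p) (hinv : ∀ ρ ∈ M, (ρ : Measure X).map T = ρ)
    (hl : ChargesBackwardInvariant T (smallMoment p M)) {m : Measure X} [IsProbabilityMeasure m]
    (hm : m.map T = m) {Ω : Set X} (hΩ : IsOpen Ω) (hne : Ω.Nonempty) (hTΩ : T ⁻¹' Ω ⊆ Ω)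
    {a : ℝ≥0∞} (ha : a < 1) :
    ∃ᶠ ρ : ProbabilityMeasure X in smallMoment p M, a < (m ∗ (ρ : Measure X)) Ω := by
  obtain ⟨z, hz⟩ := lt_iSup_iff.1
    (ha.trans_eq (iSup_measure_add_mem_eq_one hp hinv hl hm hΩ hne hTΩ).symm)
  exact frequently_lt_conv hl hm hΩ hTΩ hz

end Perturbation

section Series

lemma tsum_inv_two_pow_add_one : ∑' i : ℕ, (2⁻¹ : ℝ≥0∞) ^ (i + 1) = 1 := by
  rw [ENNReal.tsum_geometric_add_one, ENNReal.one_sub_inv_two, inv_inv,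
    ENNReal.inv_mul_cancel (by simp) (by simp)]

lemma map_sum_range_infinitePi {E : Type*} [AddCommMonoid E] [MeasurableSpace E] [MeasurableAdd₂ E]
    {ν m : ℕ → Measure E} [∀ k, IsProbabilityMeasure (ν k)] (hm0 : m 0 = Measure.dirac 0)
    (hm : ∀ k, m (k + 1) = m k ∗ ν k) (k : ℕ) :
    (Measure.infinitePi ν).map (fun ω => ∑ i ∈ Finset.range k, ω i) = m k := by
  induction k with
  | zero => simp [hm0]
  | succ k ih =>
    have hindep := (ProbabilityTheory.iIndepFun_infinitePi
      (P := ν) fun _ => measurable_id).indepFun_sum_range_succ (fun i => measurable_pi_apply i) k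
    have hlaw := hindep.map_add_eq_map_conv_map (by fun_prop) (by fun_prop)
    simpa [hm, ← ih, Finset.sum_range_succ, Measure.infinitePi_map_eval, Finset.sum_fn,
      Pi.add_def] using hlaw

variable {p : ℝ}

lemma tsum_rpow_le (hp : 0 < p) (a : ℕ → ℝ≥0∞) :
    (∑' i, a i) ^ p ≤ ∑' i, ((2 : ℝ≥0∞) ^ p) ^ (i + 1) * a i ^ p := by
  have hsup : ∑' i, a i ≤ ⨆ i, 2 ^ (i + 1) * a i := by
    calc ∑' i, a i = ∑' i, 2⁻¹ ^ (i + 1) * (2 ^ (i + 1) * a i) := by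
          refine tsum_congr fun i => ?_
          rw [← mul_assoc, ← mul_pow, ENNReal.inv_mul_cancel (by simp) (by simp), one_pow, one_mul]
      _ ≤ ∑' i : ℕ, 2⁻¹ ^ (i + 1) * ⨆ i, 2 ^ (i + 1) * a i :=
          ENNReal.tsum_le_tsum fun i => by gcongr; exact le_iSup (fun i => 2 ^ (i + 1) * a i) i
      _ = ⨆ i, 2 ^ (i + 1) * a i := by
          rw [ENNReal.tsum_mul_right, tsum_inv_two_pow_add_one, one_mul]
  calc (∑' i, a i) ^ p ≤ (⨆ i, 2 ^ (i + 1) * a i) ^ p := by gcongr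
    _ = ⨆ i, (2 ^ (i + 1) * a i) ^ p :=
        (ENNReal.monotone_rpow_of_nonneg hp.le).map_iSup_of_continuousAt
          ENNReal.continuous_rpow_const.continuousAt (by simp [hp])
    _ = ⨆ i, ((2 : ℝ≥0∞) ^ p) ^ (i + 1) * a i ^ p := by
        simp only [ENNReal.mul_rpow_of_nonneg _ _ hp.le, ← ENNReal.rpow_natCast_mul,
          ← ENNReal.rpow_mul_natCast, mul_comm p]
    _ ≤ ∑' i, ((2 : ℝ≥0∞) ^ p) ^ (i + 1) * a i ^ p :=
        iSup_le fun i => ENNReal.le_tsum (f := fun i => ((2 : ℝ≥0∞) ^ p) ^ (i + 1) * a i ^ p) i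

lemma lintegral_tsum_rpow_le {Ω : Type*} [MeasurableSpace Ω] {P : Measure Ω} (hp : 0 < p)
    {f : ℕ → Ω → ℝ≥0∞} (hf : ∀ j, Measurable (f j)) {r s : ℝ≥0∞} (hr : 2 ^ p * r ≤ 2⁻¹)
    (hfs : ∀ j, ∫⁻ ω, f j ω ^ p ∂P ≤ s * r ^ (j + 1)) :
    ∫⁻ ω, (∑' j, f j ω) ^ p ∂P ≤ s := by
  calc ∫⁻ ω, (∑' j, f j ω) ^ p ∂P
      ≤ ∫⁻ ω, ∑' j, ((2 : ℝ≥0∞) ^ p) ^ (j + 1) * f j ω ^ p ∂P :=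
        lintegral_mono fun ω => tsum_rpow_le hp _
    _ = ∑' j, ((2 : ℝ≥0∞) ^ p) ^ (j + 1) * ∫⁻ ω, f j ω ^ p ∂P := by
        rw [lintegral_tsum fun j => by fun_prop]
        exact tsum_congr fun j => lintegral_const_mul _ (by fun_prop)
    _ ≤ ∑' j : ℕ, 2⁻¹ ^ (j + 1) * s := ENNReal.tsum_le_tsum fun j => by
        calc ((2 : ℝ≥0∞) ^ p) ^ (j + 1) * ∫⁻ ω, f j ω ^ p ∂P
            ≤ (2 ^ p) ^ (j + 1) * (s * r ^ (j + 1)) := by gcongr; exact hfs j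
          _ = (2 ^ p * r) ^ (j + 1) * s := by rw [mul_pow]; ring
          _ ≤ 2⁻¹ ^ (j + 1) * s := by gcongr
    _ = s := by rw [ENNReal.tsum_mul_right, tsum_inv_two_pow_add_one, one_mul]

variable {X Ω : Type*} [NormedAddCommGroup X] [CompleteSpace X] [MeasurableSpace X] [BorelSpace X]
  [MeasurableSpace Ω] {P : Measure Ω} {Y : ℕ → Ω → X}

lemma ae_summable_of_lintegral_rpow_le (hp : 0 < p) (hY : ∀ j, Measurable (Y j)) {r s : ℝ≥0∞}
    (hr : 2 ^ p * r ≤ 2⁻¹) (hs : s ≠ ∞) (hYs : ∀ j, ∫⁻ ω, ‖Y j ω‖ₑ ^ p ∂P ≤ s * r ^ (j + 1)) :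
    ∀ᵐ ω ∂P, Summable fun j => Y j ω := by
  have hfin : ∫⁻ ω, (∑' j, ‖Y j ω‖ₑ) ^ p ∂P ≠ ∞ :=
    ne_top_of_le_ne_top hs (lintegral_tsum_rpow_le hp (fun j => (hY j).enorm) hr hYs)
  filter_upwards [ae_lt_top (by fun_prop) hfin] with ω hω
  exact Summable.of_enorm ((ENNReal.rpow_lt_top_iff_of_pos hp).1 hω).ne

lemma lintegral_enorm_tsum_sub_sum_rpow_le (hp : 0 < p) (hY : ∀ j, Measurable (Y j))
    {r : ℝ≥0∞} (hr : 2 ^ p * r ≤ 2⁻¹) {t : ℕ → ℝ≥0∞} (ht : Antitone t) (ht0 : t 0 ≤ 1)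
    (hYt : ∀ j, ∫⁻ ω, ‖Y j ω‖ₑ ^ p ∂P ≤ t j * r ^ (j + 1)) (k : ℕ) :
    ∫⁻ ω, ‖∑' j, Y j ω - ∑ j ∈ Finset.range k, Y j ω‖ₑ ^ p ∂P ≤ t k := by
  have hr1 : r ≤ 1 := by
    calc r ≤ 2 ^ p * r := le_mul_of_one_le_left' (ENNReal.one_le_rpow (by norm_num) hp)
      _ ≤ 1 := hr.trans (by simp)
  have hsummable : ∀ᵐ ω ∂P, Summable fun j => Y j ω :=
    ae_summable_of_lintegral_rpow_le hp hY hr ENNReal.one_ne_top fun j =>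
      (hYt j).trans (by gcongr; exact (ht j.zero_le).trans ht0)
  calc ∫⁻ ω, ‖∑' j, Y j ω - ∑ j ∈ Finset.range k, Y j ω‖ₑ ^ p ∂P
      ≤ ∫⁻ ω, (∑' j, ‖Y (j + k) ω‖ₑ) ^ p ∂P := by
        refine lintegral_mono_ae (hsummable.mono fun ω hω => ?_)
        rw [← hω.sum_add_tsum_nat_add k, add_sub_cancel_left]
        gcongr
        exact enorm_tsum_le_tsum_enorm
    _ ≤ t k := by
        refine lintegral_tsum_rpow_le hp (fun j => (hY _).enorm) hr fun j => (hYt _).trans ?_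
        exact mul_le_mul' (ht (Nat.le_add_left k j)) (pow_le_pow_right_of_le_one' hr1 (by lia))

variable [SecondCountableTopology X]

lemma exists_tendsto_of_conv (hp : 0 < p) {r : ℝ≥0∞} (hr : 2 ^ p * r ≤ 2⁻¹)
    {ν m : ℕ → ProbabilityMeasure X} (hm0 : (m 0 : Measure X) = Measure.dirac 0)
    (hm : ∀ k, (m (k + 1) : Measure X) = (m k : Measure X) ∗ (ν k : Measure X))
    {t : ℕ → ℝ≥0∞} (ht : Antitone t) (ht0 : t 0 ≤ 1)
    (hν : ∀ k, moment p (ν k : Measure X) ≤ t k * r ^ (k + 1)) :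
    ∃ μ : ProbabilityMeasure X, Tendsto m atTop (𝓝 μ) ∧ moment p (μ : Measure X) ≤ 1 ∧
      ∀ k O a, MeasurableSet O → IsStable p (m k : Measure X) O a (t k) →
        a < (μ : Measure X) O := by
  let P := Measure.infinitePi fun k => (ν k : Measure X)
  have hY (j : ℕ) : Measurable fun ω : ℕ → X => ω j := measurable_pi_apply j
  have hYt (j : ℕ) : ∫⁻ ω, ‖ω j‖ₑ ^ p ∂P ≤ t j * r ^ (j + 1) := by
    rw [← lintegral_map (f := fun x : X => ‖x‖ₑ ^ p) (by fun_prop) (hY j),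
      Measure.infinitePi_map_eval]
    exact hν j
  have hsummable : ∀ᵐ ω ∂P, Summable ω :=
    ae_summable_of_lintegral_rpow_le hp hY hr ENNReal.one_ne_top fun j =>
      (hYt j).trans (by gcongr; exact (ht j.zero_le).trans ht0)
  have htail := lintegral_enorm_tsum_sub_sum_rpow_le hp hY hr ht ht0 hYt
  have hpartial (k : ℕ) : P.map (fun ω => ∑ i ∈ Finset.range k, ω i) = m k :=
    map_sum_range_infinitePi (ν := fun k => (ν k : Measure X)) (m := fun k => (m k : Measure X))
      hm0 hm k
  have hS : Measurable fun ω : ℕ → X => ∑' j, ω j := Measurable.tsum fun j => by fun_prop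
  have hdistr := tendstoInDistribution_of_ae_tendsto (X := fun k ω => ∑ i ∈ Finset.range k, ω i)
    (fun k => by fun_prop) hS.aemeasurable (hsummable.mono fun ω hω => hω.hasSum.tendsto_sum_nat)
  refine ⟨⟨P.map _, Measure.isProbabilityMeasure_map hS.aemeasurable⟩, ?_, ?_,
    fun k O a hO hstable => ?_⟩
  · exact hdistr.tendsto.congr fun k => Subtype.ext (hpartial k)
  · rw [ProbabilityMeasure.coe_mk, moment, lintegral_map (by fun_prop) hS]
    simpa using (htail 0).trans ht0
  · simpa using hstable.lt_map_add (U := fun ω : ℕ → X => ∑ j ∈ Finset.range k, ω j)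
      (V := fun ω => ∑' j, ω j - ∑ j ∈ Finset.range k, ω j) hO (by fun_prop)
      (hS.sub (by fun_prop)) (hpartial k) (htail k)

end Series

section Recursion

variable {X : Type*} [NormedAddCommGroup X] [NormedSpace ℝ X] [MeasurableSpace X] [BorelSpace X]
  [SecondCountableTopology X] {T : X →L[ℝ] X} {M : Set (ProbabilityMeasure X)} {p : ℝ}

lemma exists_conv_isStable (hp : 0 < p) (hinv : ∀ ρ ∈ M, (ρ : Measure X).map T = ρ)
    (hl : ChargesBackwardInvariant T (smallMoment p M)) {m : ProbabilityMeasure X}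
    (hm : (m : Measure X).map T = m)
    (hmM : ∀ ρ ∈ M, ∃ μ ∈ M, (μ : Measure X) = (m : Measure X) ∗ (ρ : Measure X))
    {O : Set X} (hO : IsOpen O) (hne : O.Nonempty) (hTO : T ⁻¹' O ⊆ O) {a s : ℝ≥0∞} (ha : a < 1)
    (hs : 0 < s) :
    ∃ ν μ : ProbabilityMeasure X, ∃ t, μ ∈ M ∧ (μ : Measure X) = (m : Measure X) ∗ (ν : Measure X) ∧
      moment p (ν : Measure X) ≤ s ∧ 0 < t ∧ IsStable p (μ : Measure X) O a t := by
  have hsmall : ∀ᶠ ρ : ProbabilityMeasure X in smallMoment p M,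
      moment p (ρ : Measure X) ≤ s ∧ ρ ∈ M :=
    Eventually.and (mem_inf_of_left (preimage_mem_comap (eventually_le_nhds hs)))
      (mem_inf_of_right (mem_principal_self M))
  obtain ⟨ν, hνO, hνs, hνM⟩ :=
    ((frequently_lt_conv_of_lt_one hp hinv hl hm hO hne hTO ha).and_eventually hsmall).exists
  obtain ⟨μ, hμM, hμ⟩ := hmM ν hνM
  obtain ⟨t, ht, hstable⟩ := exists_isStable hp (μ : Measure X) hO (hμ ▸ hνO)
  exact ⟨ν, μ, t, hμM, hμ, hνs, ht, hstable⟩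

lemma exists_seq_conv_isStable (hp : 0 < p) (hinv : ∀ ρ ∈ M, (ρ : Measure X).map T = ρ)
    (hconv : ∀ μ ∈ M, ∀ ρ ∈ M, ∃ ν ∈ M, (ν : Measure X) = (μ : Measure X) ∗ (ρ : Measure X))
    (hl : ChargesBackwardInvariant T (smallMoment p M)) {O : ℕ → Set X} (hO : ∀ k, IsOpen (O k))
    (hne : ∀ k, (O k).Nonempty) (hTO : ∀ k, T ⁻¹' O k ⊆ O k) {a : ℕ → ℝ≥0∞} (ha : ∀ k, a k < 1)
    {r : ℝ≥0∞} (hr : r ≠ 0) :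
    ∃ (ν m : ℕ → ProbabilityMeasure X) (t : ℕ → ℝ≥0∞), (m 0 : Measure X) = Measure.dirac 0 ∧
      (∀ k, (m (k + 1) : Measure X) = (m k : Measure X) ∗ (ν k : Measure X)) ∧
      (∀ k, m (k + 1) ∈ M) ∧ Antitone t ∧ t 0 = 1 ∧
      (∀ k, moment p (ν k : Measure X) ≤ t k * r ^ (k + 1)) ∧
      ∀ k, IsStable p (m (k + 1) : Measure X) (O k) (a k) (t (k + 1)) := by
  let S := {q : ProbabilityMeasure X × ℝ≥0∞ // (q.1 : Measure X).map T = q.1 ∧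
    (∀ ρ ∈ M, ∃ μ ∈ M, (μ : Measure X) = (q.1 : Measure X) ∗ (ρ : Measure X)) ∧ 0 < q.2}
  have hstep (k : ℕ) (q : S) : ∃ (ν : ProbabilityMeasure X) (q' : S),
      (q'.1.1 : Measure X) = (q.1.1 : Measure X) ∗ (ν : Measure X) ∧ q'.1.1 ∈ M ∧
      q'.1.2 ≤ q.1.2 ∧ moment p (ν : Measure X) ≤ q.1.2 * r ^ (k + 1) ∧
      IsStable p (q'.1.1 : Measure X) (O k) (a k) q'.1.2 := by
    obtain ⟨⟨m, s⟩, hm, hmM, hs⟩ := q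
    obtain ⟨ν, μ, t, hμM, hμ, hν, ht, hstable⟩ := exists_conv_isStable hp hinv hl hm hmM (hO k)
      (hne k) (hTO k) (ha k) (ENNReal.mul_pos hs.ne' (pow_ne_zero (k + 1) hr))
    exact ⟨ν, ⟨(μ, min s t), hinv μ hμM, hconv μ hμM, lt_min hs ht⟩, hμ, hμM, min_le_left s t, hν,
      hstable.mono (min_le_right s t)⟩
  choose ν next hnext hnextM hle hν hstable using hstep
  let start : S := ⟨(⟨Measure.dirac 0, inferInstance⟩, 1),
    by simp [Measure.map_dirac' T.continuous.measurable],
    fun ρ hρ => ⟨ρ, hρ, (Measure.dirac_zero_conv _).symm⟩, one_pos⟩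
  let q : ℕ → S := fun k => Nat.rec start next k
  exact ⟨fun k => ν k (q k), fun k => (q k).1.1, fun k => (q k).1.2, rfl,
    fun k => hnext k (q k), fun k => hnextM k (q k), antitone_nat_of_succ_le fun k => hle k (q k),
    rfl, fun k => hν k (q k), fun k => hstable k (q k)⟩

lemma exists_mem_closure_forall_lt [CompleteSpace X] (hp : 0 < p)
    (hinv : ∀ ρ ∈ M, (ρ : Measure X).map T = ρ)
    (hconv : ∀ μ ∈ M, ∀ ρ ∈ M, ∃ ν ∈ M, (ν : Measure X) = (μ : Measure X) ∗ (ρ : Measure X))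
    (hl : ChargesBackwardInvariant T (smallMoment p M)) {O : ℕ → Set X} (hO : ∀ k, IsOpen (O k))
    (hne : ∀ k, (O k).Nonempty) (hTO : ∀ k, T ⁻¹' O k ⊆ O k) {a : ℕ → ℝ≥0∞} (ha : ∀ k, a k < 1) :
    ∃ μ ∈ closure M, moment p (μ : Measure X) ≤ 1 ∧ ∀ k, a k < (μ : Measure X) (O k) := by
  obtain ⟨ν, m, t, hm0, hm, hmM, ht, ht0, hν, hstable⟩ :=
    exists_seq_conv_isStable hp hinv hconv hl hO hne hTO ha
      (r := (2 ^ p)⁻¹ * 2⁻¹) (mul_ne_zero (by simp) (by simp))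
  obtain ⟨μ, hlim, hmom, hμ⟩ := exists_tendsto_of_conv hp
    (ENNReal.mul_inv_cancel_left (by simp) (by finiteness)).le hm0 hm ht ht0.le hν
  have hclosure : μ ∈ closure M :=
    mem_closure_of_tendsto ((tendsto_add_atTop_iff_nat 1).2 hlim) (Eventually.of_forall hmM)
  exact ⟨μ, hclosure, hmom, fun k =>
    hμ (k + 1) (O k) (a k) (hO k).measurableSet (hstable k)⟩

end Recursion

section MeanErgodic

variable {α : Type*} [mα : MeasurableSpace α] {T : α → α} {μ : Measure α}

lemma exists_measurable_invariants_ae_eq (hT : Measure.QuasiMeasurePreserving T μ μ) {g : α → ℝ}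
    (hg : Measurable g) (hgT : g ∘ T =ᵐ[μ] g) :
    ∃ h, Measurable[MeasurableSpace.invariants T] h ∧ g =ᵐ[μ] h := by
  have hiter : ∀ n : ℕ, g ∘ T^[n] =ᵐ[μ] g := by
    intro n
    induction n with
    | zero => rfl
    | succ n ih => exact (hT.ae_eq_comp ih).trans hgT
  refine ⟨fun y => limsup (fun n => g (T^[n] y)) atTop, ?_, ?_⟩
  · rw [MeasurableSpace.measurable_invariants_dom]
    refine ⟨Measurable.limsup fun n => hg.comp (hT.measurable.iterate n), fun s _ => ?_⟩
    exact congrArg (· ⁻¹' s) (funext fun y => limsup_nat_add (fun n => g (T^[n] y)) 1)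
  · filter_upwards [ae_all_iff.2 hiter] with y hy
    simp only [Function.comp_apply] at hy
    simp only [hy, limsup_const]

/-- The Koopman operator `g ↦ g ∘ T` on `L²(μ)` of a measure preserving map. -/
noncomputable def koopman (hT : MeasurePreserving T μ μ) : Lp ℝ 2 μ →L[ℝ] Lp ℝ 2 μ :=
  (Lp.compMeasurePreservingₗᵢ (p := 2) (E := ℝ) ℝ T hT).toContinuousLinearMap

lemma coeFn_koopman (hT : MeasurePreserving T μ μ) (g : Lp ℝ 2 μ) : koopman hT g =ᵐ[μ] g ∘ T :=
  Lp.coeFn_compMeasurePreserving g hT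

lemma norm_koopman_le_one (hT : MeasurePreserving T μ μ) : ‖koopman hT‖ ≤ 1 :=
  (Lp.compMeasurePreservingₗᵢ (p := 2) (E := ℝ) ℝ T hT).norm_toContinuousLinearMap_le

lemma eqLocus_koopman_one (hT : MeasurePreserving T μ μ) :
    (koopman hT : Lp ℝ 2 μ →ₗ[ℝ] Lp ℝ 2 μ).eqLocus
      ((1 : Lp ℝ 2 μ →L[ℝ] Lp ℝ 2 μ) : Lp ℝ 2 μ →ₗ[ℝ] Lp ℝ 2 μ) =
    lpMeas ℝ ℝ (MeasurableSpace.invariants T) 2 μ := by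
  ext g
  rw [mem_lpMeas_iff_aestronglyMeasurable, LinearMap.mem_eqLocus]
  change koopman hT g = g ↔ _
  constructor
  · intro hg
    have hgT : (g : α → ℝ) ∘ T =ᵐ[μ] g := by
      simpa only [hg] using (coeFn_koopman hT g).symm
    obtain ⟨h, hh, hgh⟩ := exists_measurable_invariants_ae_eq hT.quasiMeasurePreserving
      (Lp.stronglyMeasurable g).measurable hgT
    exact ⟨h, hh.stronglyMeasurable, hgh⟩
  · rintro ⟨h, hh, hgh⟩
    refine Lp.ext ((coeFn_koopman hT g).trans
      ((hT.quasiMeasurePreserving.ae_eq_comp hgh).trans ?_))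
    rw [MeasurableSpace.comp_eq_of_measurable_invariants hh.measurable]
    exact hgh.symm

lemma coeFn_iterate_koopman (hT : MeasurePreserving T μ μ) {f : α → ℝ} (hf : MemLp f 2 μ) (n : ℕ) :
    (koopman hT)^[n] (hf.toLp f) =ᵐ[μ] f ∘ T^[n] := by
  induction n with
  | zero => exact hf.coeFn_toLp
  | succ n ih =>
    rw [Function.iterate_succ_apply']
    exact (coeFn_koopman hT _).trans (hT.quasiMeasurePreserving.ae_eq_comp ih)

lemma coeFn_birkhoffSum_koopman (hT : MeasurePreserving T μ μ) {f : α → ℝ} (hf : MemLp f 2 μ)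
    (n : ℕ) :
    (birkhoffSum (koopman hT) id n (hf.toLp f) : Lp ℝ 2 μ) =ᵐ[μ] birkhoffSum T f n := by
  induction n with
  | zero =>
    simp only [birkhoffSum_zero, birkhoffSum_zero']
    exact Lp.coeFn_zero _ _ _
  | succ n ih =>
    rw [birkhoffSum_succ]
    filter_upwards [Lp.coeFn_add (birkhoffSum (koopman hT) id n (hf.toLp f)) _, ih,
      coeFn_iterate_koopman hT hf n] with y hadd hsum hiter
    rw [hadd, Pi.add_apply, hsum, birkhoffSum_succ, id, hiter, Function.comp_apply]

lemma coeFn_birkhoffAverage_koopman (hT : MeasurePreserving T μ μ) {f : α → ℝ}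
    (hf : MemLp f 2 μ) (n : ℕ) :
    (birkhoffAverage ℝ (koopman hT) id n (hf.toLp f) : Lp ℝ 2 μ) =ᵐ[μ]
      birkhoffAverage ℝ T f n := by
  rw [birkhoffAverage]
  filter_upwards [Lp.coeFn_smul (n : ℝ)⁻¹ (birkhoffSum (koopman hT) id n (hf.toLp f)),
    coeFn_birkhoffSum_koopman hT hf n] with y hsmul hsum
  rw [hsmul, Pi.smul_apply, hsum, birkhoffAverage]

lemma coe_orthogonalProjectionOnto_congr {E : Type*} [NormedAddCommGroup E]
    [InnerProductSpace ℝ E] {K L : Submodule ℝ E} [K.HasOrthogonalProjection]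
    [L.HasOrthogonalProjection] (h : K = L) (x : E) :
    (K.orthogonalProjectionOnto x : E) = L.orthogonalProjectionOnto x := by
  subst h
  rfl

lemma tendsto_birkhoffAverage_koopman (hT : MeasurePreserving T μ μ) (g : Lp ℝ 2 μ) :
    Tendsto (fun n => birkhoffAverage ℝ (koopman hT) id n g) atTop
      (𝓝 (condExpL2 ℝ ℝ (MeasurableSpace.invariants_le T) g : Lp ℝ 2 μ)) := by
  have : Fact (MeasurableSpace.invariants T ≤ mα) := ⟨MeasurableSpace.invariants_le T⟩
  have hmean := (koopman hT).tendsto_birkhoffAverage_orthogonalProjection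
    (norm_koopman_le_one hT) g
  rwa [coe_orthogonalProjectionOnto_congr (eqLocus_koopman_one hT)] at hmean

lemma exists_subseq_tendsto_birkhoffAverage_condExp [IsFiniteMeasure μ]
    (hT : MeasurePreserving T μ μ) {f : α → ℝ} (hf : MemLp f 2 μ) :
    ∃ ns : ℕ → ℕ, StrictMono ns ∧
      ∀ᵐ x ∂μ, Tendsto (fun i => birkhoffAverage ℝ T f (ns i) x) atTop
        (𝓝 ((μ[f | MeasurableSpace.invariants T]) x)) := by
  have hmean := tendsto_birkhoffAverage_koopman hT (hf.toLp f)
  rw [Lp.tendsto_Lp_iff_tendsto_eLpNorm'] at hmean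
  obtain ⟨ns, hns, hae⟩ := (tendstoInMeasure_of_tendsto_eLpNorm (by norm_num)
    (fun n => Lp.aestronglyMeasurable _) (Lp.aestronglyMeasurable _) hmean).exists_seq_tendsto_ae
  refine ⟨ns, hns, ?_⟩
  filter_upwards [hae, ae_all_iff.2 (coeFn_birkhoffAverage_koopman hT hf),
    hf.condExpL2_ae_eq_condExp (𝕜 := ℝ) (MeasurableSpace.invariants_le T)] with x hx hcoe hcond
  simpa only [hcoe, hcond] using hx

end MeanErgodic

section Independence

open ProbabilityTheory

lemma norm_birkhoffAverage_indicator_one_le {α : Type*} (T : α → α) (B : Set α) (n : ℕ) (y : α) :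
    ‖birkhoffAverage ℝ T (B.indicator (1 : α → ℝ)) n y‖ ≤ 1 := by
  have hsum : ‖birkhoffSum T (B.indicator (1 : α → ℝ)) n y‖ ≤ n := by
    refine (norm_sum_le_of_le _ fun k _ => norm_indicator_le_norm_self _ _).trans ?_
    simp
  rw [birkhoffAverage, norm_smul, norm_inv, Real.norm_natCast]
  exact inv_mul_le_one_of_le₀ hsum n.cast_nonneg

variable {α : Type*} [mα : MeasurableSpace α] {T : α → α} {ν : Measure α}

lemma measureReal_inter_preimage (hT : MeasurePreserving T ν ν) {A B : Set α}
    (hA : MeasurableSet A) (hTA : T ⁻¹' A = A) (hB : MeasurableSet B) :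
    ν.real (A ∩ T ⁻¹' B) = ν.real (A ∩ B) := by
  nth_rw 1 [← hTA]
  exact hT.measureReal_preimage (hA.inter hB).nullMeasurableSet

lemma measurable_birkhoffAverage {f : α → ℝ} (hT : Measurable T) (hf : Measurable f) (n : ℕ) :
    Measurable (birkhoffAverage ℝ T f n) :=
  (Finset.measurable_fun_sum _ fun k _ => hf.comp (hT.iterate k)).const_smul (n : ℝ)⁻¹

lemma setIntegral_birkhoffAverage_indicator_one [IsFiniteMeasure ν] (hT : MeasurePreserving T ν ν)
    {A B : Set α} (hA : MeasurableSet A) (hTA : T ⁻¹' A = A) (hB : MeasurableSet B) {n : ℕ}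
    (hn : n ≠ 0) :
    ∫ y in A, birkhoffAverage ℝ T (B.indicator 1) n y ∂ν = ν.real (A ∩ B) := by
  have hBk : ∀ k, MeasurableSet (T^[k] ⁻¹' B) := fun k => hT.measurable.iterate k hB
  have hterm : ∀ k, ∫ y in A, B.indicator (1 : α → ℝ) (T^[k] y) ∂ν = ν.real (A ∩ B) := by
    intro k
    have hTk : T^[k] ⁻¹' A = A := by
      rw [preimage_iterate_eq]
      exact Function.iterate_fixed hTA k
    calc ∫ y in A, B.indicator (1 : α → ℝ) (T^[k] y) ∂ν
        = ∫ y in A, (T^[k] ⁻¹' B).indicator 1 y ∂ν := rfl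
      _ = ν.real (A ∩ T^[k] ⁻¹' B) := by
        rw [integral_indicator_one (hBk k), measureReal_restrict_apply (hBk k), inter_comm]
      _ = ν.real (A ∩ B) := measureReal_inter_preimage (hT.iterate k) hA hTk hB
  simp only [birkhoffAverage, birkhoffSum, smul_eq_mul]
  rw [integral_const_mul, integral_finsetSum]
  · simp only [hterm, Finset.sum_const, Finset.card_range, nsmul_eq_mul]
    field_simp
  · intro k _
    exact ((integrable_const (1 : ℝ)).indicator (hBk k)).integrableOn

lemma measureReal_inter_eq_mul_of_tendsto_birkhoffAverage [IsFiniteMeasure ν]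
    (hT : MeasurePreserving T ν ν) {A B : Set α} (hA : MeasurableSet A) (hTA : T ⁻¹' A = A)
    (hB : MeasurableSet B) {ns : ℕ → ℕ} (hns : StrictMono ns) {c : ℝ}
    (hlim : ∀ᵐ y ∂ν, Tendsto (fun i => birkhoffAverage ℝ T (B.indicator 1) (ns i) y) atTop (𝓝 c)) :
    ν.real (A ∩ B) = ν.real A * c := by
  have hint : Tendsto (fun i => ∫ y in A, birkhoffAverage ℝ T (B.indicator 1) (ns i) y ∂ν) atTop
      (𝓝 (∫ _ in A, c ∂ν)) :=
    tendsto_integral_of_dominated_convergence (fun _ => 1)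
      (fun i => (measurable_birkhoffAverage hT.measurable
        (measurable_one.indicator hB) (ns i)).aestronglyMeasurable)
      (integrable_const _)
      (fun i => .of_forall (norm_birkhoffAverage_indicator_one_le T B (ns i)))
      (ae_restrict_of_ae hlim)
  have hconst : ∀ᶠ i in atTop,
      ∫ y in A, birkhoffAverage ℝ T (B.indicator 1) (ns i) y ∂ν = ν.real (A ∩ B) := by
    filter_upwards [eventually_gt_atTop 0] with i hi
    exact setIntegral_birkhoffAverage_indicator_one hT hA hTA hB (hi.trans_le (hns.le_apply)).ne'
  rw [← tendsto_nhds_unique (hint.congr' hconst) tendsto_const_nhds, setIntegral_const, smul_eq_mul]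

lemma ergodic_of_indepSets_invariants [IsProbabilityMeasure ν] (hT : MeasurePreserving T ν ν)
    {S : Set (Set α)} (hgen : mα = MeasurableSpace.generateFrom S) (hpi : IsPiSystem S)
    (h : IndepSets {A | MeasurableSet[MeasurableSpace.invariants T] A} S ν) : Ergodic T ν := by
  have hindep : Indep (MeasurableSpace.invariants T) mα ν :=
    h.indep (MeasurableSpace.invariants_le T) le_rfl
      (@MeasurableSpace.isPiSystem_measurableSet _ (MeasurableSpace.invariants T)) hpi
      (@MeasurableSpace.generateFrom_measurableSet _ (MeasurableSpace.invariants T)).symm hgen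
  refine ⟨hT, ⟨fun A hA hTA => ?_⟩⟩
  have hself : IndepSet A A ν := hindep.indepSet_of_measurableSet ⟨hA, hTA⟩ hA
  rw [eventuallyConst_set', ae_eq_empty, ae_eq_univ, prob_compl_eq_zero_iff hA]
  exact measure_eq_zero_or_one_of_indepSet_self hself

end Independence

section ErgodicDecomposition

open ProbabilityTheory

lemma exists_countable_isPiSystem_generateFrom (α : Type*) [mα : MeasurableSpace α]
    [MeasurableSpace.CountablyGenerated α] :
    ∃ S : Set (Set α), S.Countable ∧ IsPiSystem S ∧ mα = MeasurableSpace.generateFrom S :=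
  ⟨generateSetAlgebra (MeasurableSpace.countableGeneratingSet α),
    countable_generateSetAlgebra MeasurableSpace.countable_countableGeneratingSet,
    fun _ hs _ ht _ => isSetAlgebra_generateSetAlgebra.inter_mem hs ht, by
      rw [generateFrom_generateSetAlgebra_eq, MeasurableSpace.generateFrom_countableGeneratingSet]⟩

variable {α : Type*} {m : MeasurableSpace α} [mα : MeasurableSpace α] [StandardBorelSpace α]
  {T : α → α} {μ : Measure α} [IsFiniteMeasure μ]

lemma ae_ae_condExpKernel (hm : m ≤ mα) {P : α → Prop} (h : ∀ᵐ x ∂μ, P x) :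
    ∀ᵐ x ∂μ, ∀ᵐ y ∂(condExpKernel μ m x), P y := by
  refine ae_of_ae_trim hm (Measure.ae_ae_of_ae_comp ?_)
  rwa [condExpKernel_comp_trim hm]

lemma ae_lintegral_condExpKernel_lt_top (hm : m ≤ mα) {f : α → ℝ≥0∞} (hf : Measurable f)
    (hfin : ∫⁻ x, f x ∂μ ≠ ∞) : ∀ᵐ x ∂μ, ∫⁻ y, f y ∂(condExpKernel μ m x) < ∞ := by
  refine ae_of_ae_trim hm (ae_lt_top hf.lintegral_kernel ?_)
  rwa [← Measure.lintegral_bind (Kernel.aemeasurable _) hf.aemeasurable,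
    condExpKernel_comp_trim hm]

-- The joint law of `(x, y)`, with `y` drawn from the kernel at `x`, lives on the diagonal.
lemma ae_ae_condExpKernel_eq_self {β : Type*} [MeasurableSpace β] [MeasurableEq β]
    (hm : m ≤ mα) {g : α → β} (hg : Measurable[m] g) :
    ∀ᵐ x ∂μ, ∀ᵐ y ∂(condExpKernel μ m x), g y = g x := by
  refine ae_of_ae_trim hm (Measure.ae_ae_of_ae_compProd (p := fun q => g q.2 = g q.1) ?_)
  rw [compProd_trim_condExpKernel hm]
  have heq : MeasurableSet[m.prod mα] {q : α × α | g q.2 = g q.1} :=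
    measurableSet_eq_fun ((hg.mono hm le_rfl).comp measurable_snd) (hg.comp measurable_fst)
  have hdiag : @Measurable α (α × α) mα (m.prod mα) Function.diag :=
    (measurable_id'' hm).prodMk measurable_id
  exact (@ae_map_iff _ _ _ (m.prod mα) _ _ (@Measurable.aemeasurable _ _ _ (m.prod mα) _ _ hdiag)
    _ heq).2 (.of_forall fun _ => rfl)

lemma ae_condExpKernel_preimage (hT : MeasurePreserving T μ μ) {B : Set α}
    (hB : MeasurableSet B) :
    ∀ᵐ x ∂μ, condExpKernel μ (MeasurableSpace.invariants T) x (T ⁻¹' B) =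
      condExpKernel μ (MeasurableSpace.invariants T) x B := by
  have hle := MeasurableSpace.invariants_le T
  have hTB : MeasurableSet (T ⁻¹' B) := hT.measurable hB
  have hcond : μ⟦B | MeasurableSpace.invariants T⟧ =ᵐ[μ]
      μ⟦T ⁻¹' B | MeasurableSpace.invariants T⟧ := by
    refine ae_eq_condExp_of_forall_setIntegral_eq hle ((integrable_const _).indicator hTB)
      (fun _ _ _ => integrable_condExp.integrableOn) (fun A hA _ => ?_)
      stronglyMeasurable_condExp.aestronglyMeasurable
    rw [setIntegral_condExp hle ((integrable_const _).indicator hB) hA, setIntegral_indicator hB,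
      setIntegral_indicator hTB, setIntegral_const, setIntegral_const,
      measureReal_inter_preimage hT (hle _ hA) hA.2 hB]
  filter_upwards [condExpKernel_ae_eq_condExp hle hB, condExpKernel_ae_eq_condExp hle hTB,
    hcond] with x hxB hxTB hx
  rw [← hxB, ← hxTB] at hx
  exact ((ENNReal.toReal_eq_toReal_iff' (measure_ne_top _ _) (measure_ne_top _ _)).1 hx).symm

lemma ae_measurePreserving_condExpKernel (hT : MeasurePreserving T μ μ) :
    ∀ᵐ x ∂μ, MeasurePreserving T (condExpKernel μ (MeasurableSpace.invariants T) x)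
      (condExpKernel μ (MeasurableSpace.invariants T) x) := by
  obtain ⟨S, hS, hpi, hgen⟩ := exists_countable_isPiSystem_generateFrom α
  have hmeas : ∀ s ∈ S, MeasurableSet s := fun s hs => by
    rw [hgen]
    exact MeasurableSpace.measurableSet_generateFrom hs
  filter_upwards [(ae_ball_iff hS).2 fun s hs => ae_condExpKernel_preimage hT (hmeas s hs)]
    with x hx
  refine ⟨hT.measurable, ext_of_generate_finite S hgen hpi (fun s hs => ?_) ?_⟩
  · rw [Measure.map_apply hT.measurable (hmeas s hs), hx s hs]
  · rw [Measure.map_apply hT.measurable .univ, preimage_univ]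

lemma ae_measureReal_inter_condExpKernel (hT : MeasurePreserving T μ μ) {B : Set α}
    (hB : MeasurableSet B) :
    ∀ᵐ x ∂μ, ∀ A, MeasurableSet[MeasurableSpace.invariants T] A →
      (condExpKernel μ (MeasurableSpace.invariants T) x).real (A ∩ B) =
        (condExpKernel μ (MeasurableSpace.invariants T) x).real A *
          (condExpKernel μ (MeasurableSpace.invariants T) x).real B := by
  have hle := MeasurableSpace.invariants_le T
  obtain ⟨ns, hns, hlim⟩ := exists_subseq_tendsto_birkhoffAverage_condExp hT
    (memLp_indicator_const 2 hB (1 : ℝ) (Or.inr (measure_ne_top _ _)))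
  have hlim' : ∀ᵐ x ∂μ, Tendsto (fun i => birkhoffAverage ℝ T (B.indicator 1) (ns i) x) atTop
      (𝓝 ((condExpKernel μ (MeasurableSpace.invariants T) x).real B)) := by
    filter_upwards [hlim, condExpKernel_ae_eq_condExp hle hB] with x hx hcond
    rwa [hcond]
  have hconst := ae_ae_condExpKernel_eq_self (μ := μ) hle
    (measurable_condExpKernel (μ := μ) hB).ennreal_toReal
  filter_upwards [ae_measurePreserving_condExpKernel hT, ae_ae_condExpKernel hle hlim', hconst]
    with x hTx hx hxc A hA
  refine measureReal_inter_eq_mul_of_tendsto_birkhoffAverage hTx hA.1 hA.2 hB hns ?_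
  filter_upwards [hx, hxc] with y hy hyc
  rw [measureReal_def, ← hyc]
  exact hy

lemma ae_ergodic_condExpKernel (hT : MeasurePreserving T μ μ) :
    ∀ᵐ x ∂μ, Ergodic T (condExpKernel μ (MeasurableSpace.invariants T) x) := by
  obtain ⟨S, hS, hpi, hgen⟩ := exists_countable_isPiSystem_generateFrom α
  have hmeas : ∀ s ∈ S, MeasurableSet s := fun s hs => by
    rw [hgen]
    exact MeasurableSpace.measurableSet_generateFrom hs
  filter_upwards [ae_measurePreserving_condExpKernel hT,
    (ae_ball_iff hS).2 fun s hs => ae_measureReal_inter_condExpKernel hT (hmeas s hs)] with x hTx hx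
  refine ergodic_of_indepSets_invariants hTx hgen hpi ((IndepSets_iff _ _ _).2 fun A B hA hB => ?_)
  have := hx B hB A hA
  rwa [measureReal_def, measureReal_def, measureReal_def, ← ENNReal.toReal_mul,
    ENNReal.toReal_eq_toReal_iff' (by finiteness) (by finiteness)] at this

lemma exists_ergodic_of_measurePreserving [NeZero μ] (hT : MeasurePreserving T μ μ)
    {f : α → ℝ≥0∞} (hf : Measurable f) (hfin : ∫⁻ x, f x ∂μ ≠ ∞) {P : α → Prop}
    (hP : ∀ᵐ x ∂μ, P x) :
    ∃ ν : Measure α, IsProbabilityMeasure ν ∧ Ergodic T ν ∧ ∫⁻ x, f x ∂ν < ∞ ∧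
      ∀ᵐ x ∂ν, P x := by
  have hle := MeasurableSpace.invariants_le T
  obtain ⟨x, herg, hx, hPx⟩ := ((ae_ergodic_condExpKernel hT).and
    ((ae_lintegral_condExpKernel_lt_top hle hf hfin).and (ae_ae_condExpKernel hle hP))).exists
  exact ⟨_, inferInstance, herg, hx, hPx⟩

end ErgodicDecomposition

section Hypercyclic

/-- The points whose forward orbit under `T` meets `U`, the smallest set containing `U` that is
backward `T`-invariant. -/
def hittingSet {α : Type*} (T : α → α) (U : Set α) : Set α := ⋃ n : ℕ, T^[n] ⁻¹' U

lemma subset_hittingSet {α : Type*} (T : α → α) (U : Set α) : U ⊆ hittingSet T U :=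
  fun _ hx => mem_iUnion.2 ⟨0, hx⟩

lemma preimage_hittingSet_subset {α : Type*} (T : α → α) (U : Set α) :
    T ⁻¹' hittingSet T U ⊆ hittingSet T U := by
  intro x hx
  obtain ⟨n, hn⟩ := mem_iUnion.1 hx
  exact mem_iUnion.2 ⟨n + 1, hn⟩

lemma measure_hittingSet_eq_zero {α : Type*} [MeasurableSpace α] {μ : Measure α} {T : α → α}
    (hT : MeasurePreserving T μ μ) {U : Set α} (hU : μ U = 0) : μ (hittingSet T U) = 0 :=
  measure_iUnion_null fun n => (hT.iterate n).quasiMeasurePreserving.preimage_null hU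

variable {X : Type*} [TopologicalSpace X] {T : X → X}

lemma isOpen_hittingSet (hT : Continuous T) {U : Set X} (hU : IsOpen U) :
    IsOpen (hittingSet T U) :=
  isOpen_iUnion fun n => hU.preimage (hT.iterate n)

lemma mem_hittingSet_of_dense {x : X} (hx : Dense (range fun n : ℕ => T^[n] x)) {U : Set X}
    (hU : IsOpen U) (hne : U.Nonempty) : x ∈ hittingSet T U := by
  obtain ⟨_, hy, n, rfl⟩ := hx.inter_open_nonempty U hU hne
  exact mem_iUnion.2 ⟨n, hy⟩

lemma exists_seq_isOpen_dense_range_iff (X : Type*) [TopologicalSpace X]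
    [SecondCountableTopology X] [Nonempty X] :
    ∃ U : ℕ → Set X, (∀ j, IsOpen (U j)) ∧ (∀ j, (U j).Nonempty) ∧
      ∀ (T : X → X) (x : X), Dense (range fun n : ℕ => T^[n] x) ↔ ∀ j, x ∈ hittingSet T (U j) := by
  obtain ⟨B, hBc, hBe, hB⟩ := TopologicalSpace.exists_countable_basis X
  obtain ⟨V, hV, -⟩ :=
    hB.exists_subset_of_mem_open (mem_univ (Classical.arbitrary X)) isOpen_univ
  obtain ⟨U, rfl⟩ := hBc.exists_eq_range ⟨V, hV⟩
  have hne : ∀ j, (U j).Nonempty := fun j =>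
    nonempty_iff_ne_empty.2 fun h => hBe (h ▸ mem_range_self j)
  refine ⟨U, fun j => hB.isOpen (mem_range_self j), hne, fun T x => ?_⟩
  refine ⟨fun hx j => mem_hittingSet_of_dense hx (hB.isOpen (mem_range_self j)) (hne j),
    fun hx => hB.dense_iff.2 ?_⟩
  rintro _ ⟨j, rfl⟩ -
  obtain ⟨n, hn⟩ := mem_iUnion.1 (hx j)
  exact ⟨_, hn, n, rfl⟩

lemma measure_pos_of_ae_dense [MeasurableSpace X] {μ : Measure X} [NeZero μ]
    (hT : MeasurePreserving T μ μ) (hd : ∀ᵐ x ∂μ, Dense (range fun n : ℕ => T^[n] x))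
    {U : Set X} (hU : IsOpen U) (hne : U.Nonempty) : 0 < μ U := by
  refine pos_iff_ne_zero.2 fun h0 => ?_
  obtain ⟨x, hx, hxU⟩ := (hd.and
    (measure_eq_zero_iff_ae_notMem.1 (measure_hittingSet_eq_zero hT h0))).exists
  exact hxU (mem_hittingSet_of_dense hx hU hne)

lemma map_eq_of_mem_closure [HasOuterApproxClosed X] [MeasurableSpace X] [BorelSpace X]
    (hT : Continuous T) {M : Set (ProbabilityMeasure X)}
    (hM : ∀ μ ∈ M, (μ : Measure X).map T = μ) {μ : ProbabilityMeasure X} (hμ : μ ∈ closure M) :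
    (μ : Measure X).map T = μ := by
  have hcl : IsClosed {ν : ProbabilityMeasure X | ν.map hT.measurable.aemeasurable = ν} :=
    isClosed_eq (ProbabilityMeasure.continuous_map hT) continuous_id
  exact congrArg Subtype.val (closure_minimal (fun ν hν => Subtype.ext (hM ν hν)) hcl hμ)

lemma measure_eq_one_of_forall_one_sub_lt {α : Type*} [MeasurableSpace α] {μ : Measure α}
    [IsProbabilityMeasure μ] {S : ℕ → Set α}
    (h : ∀ k, 1 - 2⁻¹ ^ k < μ (S k.unpair.1)) (j : ℕ) : μ (S j) = 1 := by
  have hlim : Tendsto (fun i : ℕ => (1 : ℝ≥0∞) - 2⁻¹ ^ i) atTop (𝓝 1) := by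
    simpa using ENNReal.Tendsto.sub tendsto_const_nhds
      (ENNReal.tendsto_pow_atTop_nhds_zero_of_lt_one (r := 2⁻¹) (by simp))
      (Or.inl ENNReal.one_ne_top)
  refine le_antisymm prob_le_one (le_of_tendsto' hlim fun i => ?_)
  calc (1 : ℝ≥0∞) - 2⁻¹ ^ i ≤ 1 - 2⁻¹ ^ Nat.pair j i :=
        tsub_le_tsub_left (pow_le_pow_of_le_one zero_le (by simp) (Nat.right_le_pair j i)) _
    _ ≤ μ (S j) := by simpa using (h (Nat.pair j i)).le

lemma exists_mem_closure_ae_dense {X : Type*} [NormedAddCommGroup X] [NormedSpace ℝ X]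
    [CompleteSpace X] [SecondCountableTopology X] [MeasurableSpace X] [BorelSpace X]
    {T : X →L[ℝ] X} {M : Set (ProbabilityMeasure X)} {p : ℝ} (hp : 0 < p)
    (hinv : ∀ μ ∈ M, (μ : Measure X).map T = μ)
    (hconv : ∀ μ ∈ M, ∀ ρ ∈ M, ∃ ν ∈ M, (ν : Measure X) = (μ : Measure X) ∗ (ρ : Measure X))
    (hl : ChargesBackwardInvariant T (smallMoment p M)) :
    ∃ m ∈ closure M, moment p (m : Measure X) ≤ 1 ∧
      ∀ᵐ x ∂(m : Measure X), Dense (range fun n : ℕ => T^[n] x) := by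
  obtain ⟨U, hUo, hUne, hU⟩ := exists_seq_isOpen_dense_range_iff X
  have hO : ∀ j, IsOpen (hittingSet T (U j)) := fun j => isOpen_hittingSet T.continuous (hUo j)
  obtain ⟨m, hm, hmom, hlt⟩ := exists_mem_closure_forall_lt hp hinv hconv hl
    (O := fun k => hittingSet T (U k.unpair.1)) (fun _ => hO _)
    (fun _ => (hUne _).mono (subset_hittingSet T _)) (fun _ => preimage_hittingSet_subset T _)
    (a := fun k => 1 - 2⁻¹ ^ k) fun k => ENNReal.sub_lt_self (by simp) (by simp) (by simp)
  refine ⟨m, hm, hmom, ?_⟩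
  simp only [hU, ae_all_iff]
  exact fun j => (mem_ae_iff_prob_eq_one (hO j).measurableSet).2
    (measure_eq_one_of_forall_one_sub_lt (S := fun j => hittingSet T (U j)) hlt j)

end Hypercyclic
end HypercyclicMeasure

open HypercyclicMeasure in
theorem stmt17_general {X : Type*} [NormedAddCommGroup X] [NormedSpace ℝ X] [CompleteSpace X]
    [TopologicalSpace.SeparableSpace X] [MeasurableSpace X] [BorelSpace X]
    (T : X →L[ℝ] X) (M : Set (ProbabilityMeasure X))
    (hinv : ∀ μ ∈ M, (↑μ : Measure X).map T = ↑μ)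
    (hdil : ∀ μ ∈ M, ∀ r : ℝ, 0 < r →
      ∃ ν ∈ M, (↑ν : Measure X) = (↑μ : Measure X).map (fun x : X => r⁻¹ • x))
    (hconv : ∀ μ₁ ∈ M, ∀ μ₂ ∈ M, ∃ ν ∈ M,
      (↑ν : Measure X) =
        ((↑μ₁ : Measure X).prod (↑μ₂ : Measure X)).map (fun p : X × X => p.1 + p.2))
    (p : ℝ) (hp : 0 < p) (C : ℝ)
    (h : ∀ Ω : Set X, IsOpen Ω → Ω.Nonempty → (⇑T) ⁻¹' Ω ⊆ Ω →
      ∃ μ ∈ M, (↑μ : Measure X) Ω = 1 ∧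
        ∫⁻ x, (‖x‖₊ : ENNReal) ^ p ∂(↑μ : Measure X) ≤ ENNReal.ofReal C) :
    (∃ m ∈ closure M,
        (↑m : Measure X) {x : X | Dense (Set.range fun n : ℕ => (⇑T)^[n] x)} = 1 ∧
        ∫⁻ x, (‖x‖₊ : ENNReal) ^ p ∂(↑m : Measure X) < ⊤) ∧
      ∃ μ : Measure X, IsProbabilityMeasure μ ∧ Ergodic (⇑T) μ ∧
        (∀ U : Set X, IsOpen U → U.Nonempty → 0 < μ U) ∧
        ∫⁻ x, (‖x‖₊ : ENNReal) ^ p ∂μ < ⊤ := by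
  have := UniformSpace.secondCountable_of_separable X
  obtain ⟨m, hm, hmom, hdense⟩ := exists_mem_closure_ae_dense hp hinv hconv
    (chargesBackwardInvariant_smallMoment hp hdil ENNReal.ofReal_ne_top h)
  have hfin : moment p (m : Measure X) < ∞ := hmom.trans_lt ENNReal.one_lt_top
  have hHC := (measure_congr (eventuallyEq_univ.2 hdense)).trans measure_univ
  have hT : MeasurePreserving T (m : Measure X) m :=
    ⟨T.continuous.measurable, map_eq_of_mem_closure T.continuous hinv hm⟩
  obtain ⟨μ, hμ, herg, hμfin, hμdense⟩ :=
    exists_ergodic_of_measurePreserving hT (by fun_prop) hfin.ne hdense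
  exact ⟨⟨m, hm, hHC, hfin⟩, μ, hμ, herg,
    fun _ => measure_pos_of_ae_dense herg.toMeasurePreserving hμdense, hμfin⟩

/-- Let `X` be a separable Banach space, `T` a bounded linear
operator on `X`, `M` an adequate family of `T`-invariant measures and `p ∈ (0,∞)`.
Assume there is a finite constant `C` such that every backward `T`-invariant nonempty
open set `Ω` carries a measure `μ ∈ M` with `μ Ω = 1` and `∫ ‖x‖^p dμ ≤ C`. Then some
`m` in the closure of `M` satisfies `m (HC T) = 1` and `∫ ‖x‖^p dm < ∞`; in
particular, `T` admits an ergodic invariant Borel probability measure with full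
support and finite `p`-th moment. -/
theorem stmt17 {X : Type*} [NormedAddCommGroup X] [NormedSpace ℝ X] [CompleteSpace X]
    [TopologicalSpace.SeparableSpace X] [MeasurableSpace X] [BorelSpace X]
    (T : X →L[ℝ] X) (M : Set (ProbabilityMeasure X))
    (hM : AdequateFamily (⇑T) M)
    (p : ℝ) (hp : 0 < p) (C : ℝ)
    (h : ∀ Ω : Set X, IsOpen Ω → Ω.Nonempty → (⇑T) ⁻¹' Ω ⊆ Ω →
      ∃ μ ∈ M, (↑μ : Measure X) Ω = 1 ∧
        ∫⁻ x, (‖x‖₊ : ENNReal) ^ p ∂(↑μ : Measure X) ≤ ENNReal.ofReal C) :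
    (∃ m ∈ closure M,
        (↑m : Measure X) {x : X | Dense (Set.range fun n : ℕ => (⇑T)^[n] x)} = 1 ∧
        ∫⁻ x, (‖x‖₊ : ENNReal) ^ p ∂(↑m : Measure X) < ⊤) ∧
      ∃ μ : Measure X, IsProbabilityMeasure μ ∧ Ergodic (⇑T) μ ∧
        (∀ U : Set X, IsOpen U → U.Nonempty → 0 < μ U) ∧
        ∫⁻ x, (‖x‖₊ : ENNReal) ^ p ∂μ < ⊤ := by
  exact stmt17_general T M hM.invariant hM.dilation hM.convolution p hp C h
end
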